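/- arXiv:2312.13635 — 2 statements merged into one kernel-verified Lean document; each statement's English description precedes it below -/
import Mathlib

section
/- Let $\vec{P}=(p_1,p_2)$ with $1<p_1,p_2<\infty$, $1/p=1/p_1+1/p_2$ and $1<p<\infty$, let $\vec{w}=(w_1,w_2)\in A_{\vec{P}}$, let $\mathscr{D}$ be a dyadic cubes system in $\mathbb{R}^n$ and $\mathcal{S}\subset\mathscr{D}$ a sparse family. Then the following two assertions are equivalent, with the best constants $C$ in each comparable up to a factor depending only on $n$ and $\vec{P}$: (1) $\|A_{\mathscr{D},\mathcal{S}}(|f_1|\sigma_1,|f_2|\sigma_2)\|_{L^{p,\infty}(v_{\vec{w}})}\le C\prod_{i=1}^2\|f_i\|_{L^{p_i}(\sigma_i)}$ for all $f_i\in L^{p_i}(\sigma_i)$; (2) $\int_Q A_{\mathscr{D},\mathcal{S}}(|f_1|\sigma_1\chi_Q,|f_2|\sigma_2\chi_Q)\,v_{\vec{w}}\,dx\le C\prod_{i=1}^2\|f_i\|_{L^{p_i}(\sigma_i)}\,v_{\vec{w}}(Q)^{1/p'}$ for all cubes $Q\in\mathcal{S}$ and all $f_i\in L^{p_i}(\sigma_i)$,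 $i=1,2$. -/
open MeasureTheory Set ENNReal

noncomputable section

/-- Euclidean space `ℝⁿ`. -/
abbrev Rn (n : ℕ) := Fin n → ℝ

/-- `Q` is an axis-parallel (half-open) cube of sidelength `h`. -/
def HasSide {n : ℕ} (Q : Set (Rn n)) (h : ℝ) : Prop :=
  ∃ c : Rn n, Q = {x | ∀ i, c i ≤ x i ∧ x i < c i + h}

/-- `Q` is an axis-parallel cube (with positive sidelength). -/
def IsCube {n : ℕ} (Q : Set (Rn n)) : Prop :=
  ∃ h : ℝ, 0 < h ∧ HasSide Q h

/-- A dyadic cubes system: cubes of sidelengths `2^k`, pairwise nested or disjoint,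
and for each fixed `k` the cubes of sidelength `2^k` cover (hence partition) `ℝⁿ`. -/
def IsDyadicSystem {n : ℕ} (D : Set (Set (Rn n))) : Prop :=
  (∀ Q ∈ D, ∃ k : ℤ, HasSide Q ((2 : ℝ) ^ k)) ∧
  (∀ Q ∈ D, ∀ R ∈ D, Q ∩ R = Q ∨ Q ∩ R = R ∨ Q ∩ R = ∅) ∧
  (∀ k : ℤ, ∀ x : Rn n, ∃ Q ∈ D, HasSide Q ((2 : ℝ) ^ k) ∧ x ∈ Q)

/-- A sparse family: each `Q` carries a measurable subset `E Q ⊆ Q` with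
`|E Q| ≥ |Q|/2`, the sets `E Q` being pairwise disjoint. -/
def IsSparse {n : ℕ} (S : Set (Set (Rn n))) : Prop :=
  ∃ E : Set (Rn n) → Set (Rn n),
    (∀ Q ∈ S, E Q ⊆ Q ∧ MeasurableSet (E Q) ∧ volume Q ≤ 2 * volume (E Q)) ∧
    S.Pairwise fun Q R => Disjoint (E Q) (E R)

/-- A weight: a measurable nonnegative (`ℝ≥0∞`-valued) locally integrable function. -/
def IsWeight {n : ℕ} (w : Rn n → ℝ≥0∞) : Prop :=
  Measurable w ∧ ∀ Q : Set (Rn n), IsCube Q → (∫⁻ x in Q, w x) ≠ ∞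

/-- `w(Q) = ∫_Q w`. -/
def mass {n : ℕ} (w : Rn n → ℝ≥0∞) (Q : Set (Rn n)) : ℝ≥0∞ := ∫⁻ x in Q, w x

/-- `⟨w⟩_Q = w(Q)/|Q|`. -/
def avg {n : ℕ} (w : Rn n → ℝ≥0∞) (Q : Set (Rn n)) : ℝ≥0∞ := mass w Q / volume Q

/-- The conjugate exponent `q' = q/(q-1)`. -/
def conj (q : ℝ) : ℝ := q / (q - 1)

/-- The product weight `v_w = w₁^{p/p₁} w₂^{p/p₂}`. -/
def vweight {n : ℕ} (p p1 p2 : ℝ) (w1 w2 : Rn n → ℝ≥0∞) : Rn n → ℝ≥0∞ :=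
  fun x => w1 x ^ (p / p1) * w2 x ^ (p / p2)

/-- The dual weight `σ = w^{1-q'}`. -/
def dualW {n : ℕ} (q : ℝ) (w : Rn n → ℝ≥0∞) : Rn n → ℝ≥0∞ :=
  fun x => w x ^ (1 - conj q)

/-- The multilinear `A_{\vec P}` constant
`[\vec w]_{A_{\vec P}} = sup_Q ⟨v_w⟩_Q ⟨σ₁⟩_Q^{p/p₁'} ⟨σ₂⟩_Q^{p/p₂'}`. -/
def APconst {n : ℕ} (p p1 p2 : ℝ) (w1 w2 : Rn n → ℝ≥0∞) : ℝ≥0∞ :=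
  ⨆ (Q : Set (Rn n)) (_ : IsCube Q),
    avg (vweight p p1 p2 w1 w2) Q * avg (dualW p1 w1) Q ^ (p / conj p1) *
      avg (dualW p2 w2) Q ^ (p / conj p2)

/-- The (linear) `A_q` constant `[w]_{A_q} = sup_Q ⟨w⟩_Q ⟨w^{1-q'}⟩_Q^{q-1}`. -/
def AqConst {n : ℕ} (q : ℝ) (w : Rn n → ℝ≥0∞) : ℝ≥0∞ :=
  ⨆ (Q : Set (Rn n)) (_ : IsCube Q),
    avg w Q * avg (fun x => w x ^ (1 - conj q)) Q ^ (q - 1)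

/-- The Hardy–Littlewood maximal operator (over axis-parallel cubes). -/
def HLMax {n : ℕ} (w : Rn n → ℝ≥0∞) (x : Rn n) : ℝ≥0∞ :=
  ⨆ (Q : Set (Rn n)) (_ : IsCube Q) (_ : x ∈ Q), avg w Q

/-- The Fujii–Wilson `A_∞` constant `[w]_{A_∞} = sup_Q w(Q)⁻¹ ∫_Q M(wχ_Q)`. -/
def AinfConst {n : ℕ} (w : Rn n → ℝ≥0∞) : ℝ≥0∞ :=
  ⨆ (Q : Set (Rn n)) (_ : IsCube Q), (∫⁻ x in Q, HLMax (Q.indicator w) x) / mass w Q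

/-- `‖g‖_{L^p(v)}` for an `ℝ≥0∞`-valued function. -/
def lpNorm {n : ℕ} (g : Rn n → ℝ≥0∞) (p : ℝ) (v : Rn n → ℝ≥0∞) : ℝ≥0∞ :=
  (∫⁻ x, g x ^ p * v x) ^ (1 / p)

/-- `‖g‖_{L^{p,∞}(v)} = sup_{t>0} t · v({g > t})^{1/p}`. -/
def wkNorm {n : ℕ} (g : Rn n → ℝ≥0∞) (p : ℝ) (v : Rn n → ℝ≥0∞) : ℝ≥0∞ :=
  ⨆ t : ℝ≥0∞, t * mass v {x | t < g x} ^ (1 / p)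

/-- The pointwise `ℝ≥0∞`-valued absolute value of a real function. -/
def eAbs {n : ℕ} (f : Rn n → ℝ) : Rn n → ℝ≥0∞ := fun x => (‖f x‖₊ : ℝ≥0∞)

/-- `f ∈ L^p(v)`. -/
def MemLpW {n : ℕ} (f : Rn n → ℝ) (p : ℝ) (v : Rn n → ℝ≥0∞) : Prop :=
  Measurable f ∧ lpNorm (eAbs f) p v ≠ ∞

/-- The bilinear sparse operator `A_{D,S}(g₁,g₂) = ∑_{Q∈S} ⟨g₁⟩_Q ⟨g₂⟩_Q χ_Q`. -/
def sparseOp {n : ℕ} (S : Set (Set (Rn n))) (g1 g2 : Rn n → ℝ≥0∞) (x : Rn n) : ℝ≥0∞ :=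
  ∑' Q : S, Set.indicator (Q : Set (Rn n)) (fun _ => avg g1 Q * avg g2 Q) x

/-- The weighted average `⟨f⟩_Q^w = (∫_Q |f| w)/w(Q)`. -/
def wAvg {n : ℕ} (f : Rn n → ℝ) (w : Rn n → ℝ≥0∞) (Q : Set (Rn n)) : ℝ≥0∞ :=
  (∫⁻ x in Q, (‖f x‖₊ : ℝ≥0∞) * w x) / mass w Q


/-- The exponent `β = 1/p + max{min{1/p₁', (1/p₁')(p₂'/p)}, min{1/p₂', (1/p₂')(p₁'/p)}}`. -/
def betaExp (p p1 p2 : ℝ) : ℝ :=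
  1 / p + max (min (1 / conj p1) (1 / conj p1 * (conj p2 / p)))
              (min (1 / conj p2) (1 / conj p2 * (conj p1 / p)))

/-- The exponent `γ = max{1, p₁'/p, p₂'/p}`. -/
def gammaExp (p p1 p2 : ℝ) : ℝ := max 1 (max (conj p1 / p) (conj p2 / p))

end

noncomputable section


/-- The Kolmogorov constant. -/
def kolC (p : ℝ) : ℝ≥0∞ := 1 + ∑' k : ℕ, ((2 : ℝ≥0∞) ^ (1 - p)) ^ k

theorem kolC_ne_top {p : ℝ} (hp : 1 < p) : kolC p ≠ ∞ := by
  unfold kolC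
  rw [ENNReal.tsum_geometric]
  have h : (2 : ℝ≥0∞) ^ (1 - p) < 1 := by
    apply ENNReal.rpow_lt_one_of_one_lt_of_neg <;> [norm_num; linarith]
  refine ENNReal.add_ne_top.2 ⟨by simp, ?_⟩
  rw [ENNReal.inv_ne_top]
  exact (tsub_pos_of_lt h).ne'

theorem kol_pointwise (g T : ℝ≥0∞) (hT0 : T ≠ 0) :
    g ≤ T + ∑' k : ℕ, (if 2 ^ k * T < g then 2 ^ k * T else 0) := by
  have key : ∀ m : ℕ, 2 ^ m * T < g →
      2 ^ (m + 1) * T ≤ T + ∑' k : ℕ, (if 2 ^ k * T < g then 2 ^ k * T else 0) := by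
    intro m hm
    calc (2 : ℝ≥0∞) ^ (m + 1) * T = T + ∑ k ∈ Finset.range (m + 1), 2 ^ k * T := by
          clear hm
          induction m with
          | zero => simp; ring
          | succ m ih =>
            rw [Finset.sum_range_succ, ← add_assoc, ← ih]; ring
      _ = T + ∑ k ∈ Finset.range (m + 1), (if 2 ^ k * T < g then 2 ^ k * T else 0) := by
          congr 1
          refine Finset.sum_congr rfl fun k hk => ?_
          rw [if_pos]
          refine lt_of_le_of_lt ?_ hm
          gcongr
          · norm_num
          · simpa [Nat.lt_succ_iff] using hk
      _ ≤ _ := by gcongr; exact ENNReal.sum_le_tsum _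
  by_cases hall : ∀ m : ℕ, 2 ^ m * T < g
  · have : (∑' k : ℕ, (if 2 ^ k * T < g then 2 ^ k * T else 0)) = ∞ := by
      rw [eq_top_iff]
      calc ∞ = ∑' k : ℕ, T := by rw [ENNReal.tsum_const_eq_top_of_ne_zero hT0]
        _ ≤ _ := by
          refine ENNReal.tsum_le_tsum fun k => ?_
          rw [if_pos (hall k)]
          exact le_mul_of_one_le_left' (one_le_pow₀ (by norm_num))
    rw [this]; simp
  · push Not at hall
    classical
    have hs := Nat.find_spec hall
    rcases h : Nat.find hall with _ | m
    · rw [h] at hs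
      simp at hs
      exact hs.trans le_self_add
    · rw [h] at hs
      refine hs.trans (key m ?_)
      have := Nat.find_min hall (m := m) (by omega)
      simpa using this

theorem kolmogorov_aux {α : Type*} [MeasurableSpace α] (μ : Measure α) {g : α → ℝ≥0∞}
    (hg : Measurable g) {p : ℝ} (hp : 1 < p) (B : ℝ≥0∞)
    (hB : ∀ t : ℝ≥0∞, t * μ {x | t < g x} ^ (1 / p) ≤ B) (Q : Set α)
    (hQ0 : μ Q ≠ 0) (hQ : μ Q ≠ ∞) (hB0 : B ≠ 0) (hBt : B ≠ ∞) :
    ∫⁻ x in Q, g x ∂μ ≤ kolC p * B * μ Q ^ (1 - 1 / p) := by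
  have hp0 : 0 < p := by linarith
  set V := μ Q with hV
  have hVp0 : V ^ (1 / p) ≠ 0 := by
    simp [ENNReal.rpow_eq_zero_iff, hQ0, hQ]
  have hVpt : V ^ (1 / p) ≠ ∞ := ENNReal.rpow_ne_top_of_nonneg (by positivity) hQ
  set T := B / V ^ (1 / p) with hTdef
  have hT0 : T ≠ 0 := by simp [hTdef, ENNReal.div_eq_zero_iff, hB0, hQ0, hQ]
  have hT : T ≠ ∞ := by simp [hTdef, ENNReal.div_eq_top, hBt, hQ0, hQ]
  have hTV : T * V = B * V ^ (1 - 1 / p) := by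
    rw [hTdef, ENNReal.rpow_sub _ _ hQ0 hQ, ENNReal.rpow_one]
    simp only [div_eq_mul_inv]; ring
  have hm : ∀ t : ℝ≥0∞, t ≠ 0 → t ≠ ∞ → μ {x | t < g x} ≤ (B / t) ^ p := by
    intro t h0 ht
    have h1 : μ {x | t < g x} ^ (1 / p) ≤ B / t := by
      rw [ENNReal.le_div_iff_mul_le (Or.inl h0) (Or.inl ht), mul_comm]; exact hB t
    calc μ {x | t < g x} = (μ {x | t < g x} ^ (1 / p)) ^ p := by
          rw [← ENNReal.rpow_mul]; simp [hp0.ne']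
      _ ≤ _ := by gcongr
  have hterm : ∀ k : ℕ, ∫⁻ x in Q, (if 2 ^ k * T < g x then 2 ^ k * T else 0) ∂μ
      ≤ ((2 : ℝ≥0∞) ^ (1 - p)) ^ k * (T * V) := by
    intro k
    have h20 : (2 : ℝ≥0∞) ^ k ≠ 0 := by simp
    have h2t : (2 : ℝ≥0∞) ^ k ≠ ∞ := by simp
    have hms : MeasurableSet {x | 2 ^ k * T < g x} := measurableSet_lt measurable_const hg
    calc ∫⁻ x in Q, (if 2 ^ k * T < g x then 2 ^ k * T else 0) ∂μ
        ≤ ∫⁻ x, (if 2 ^ k * T < g x then 2 ^ k * T else 0) ∂μ := setLIntegral_le_lintegral _ _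
      _ = ∫⁻ x, Set.indicator {x | 2 ^ k * T < g x} (fun _ => 2 ^ k * T) x ∂μ := by
          refine lintegral_congr fun x => ?_
          simp [Set.indicator_apply]
      _ = 2 ^ k * T * μ {x | 2 ^ k * T < g x} := by
          rw [lintegral_indicator hms]; simp
      _ ≤ 2 ^ k * T * (B / (2 ^ k * T)) ^ p := by
          gcongr
          exact hm _ (mul_ne_zero h20 hT0) (ENNReal.mul_ne_top h2t hT)
      _ = ((2 : ℝ≥0∞) ^ (1 - p)) ^ k * (T * V) := by
          have e1 : B / (2 ^ k * T) = ((2 : ℝ≥0∞) ^ k)⁻¹ * V ^ (1 / p) := by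
            rw [hTdef, ENNReal.div_eq_inv_mul, ENNReal.mul_inv (Or.inl h20) (Or.inl h2t),
              ENNReal.inv_div (Or.inl hVpt) (Or.inl hVp0), mul_assoc,
              ENNReal.div_mul_cancel hB0 hBt]
          rw [e1, ENNReal.mul_rpow_of_nonneg _ _ hp0.le, ← ENNReal.rpow_mul,
            one_div_mul_cancel hp0.ne', ENNReal.rpow_one, ENNReal.inv_rpow]
          have e2 : ((2 : ℝ≥0∞) ^ (1 - p)) ^ k = 2 ^ k * (((2 : ℝ≥0∞) ^ k) ^ p)⁻¹ := by
            rw [← ENNReal.rpow_natCast, ← ENNReal.rpow_natCast, ← ENNReal.rpow_mul,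
              ← ENNReal.rpow_mul, ← ENNReal.rpow_neg, ← ENNReal.rpow_add _ _ (by simp) (by simp)]
            congr 1; ring
          rw [e2]; ring
  calc ∫⁻ x in Q, g x ∂μ
      ≤ ∫⁻ x in Q, (T + ∑' k : ℕ, (if 2 ^ k * T < g x then 2 ^ k * T else 0)) ∂μ :=
        lintegral_mono fun x => kol_pointwise _ _ hT0
    _ = T * V + ∑' k : ℕ, ∫⁻ x in Q, (if 2 ^ k * T < g x then 2 ^ k * T else 0) ∂μ := by
        rw [lintegral_add_left measurable_const, lintegral_tsum]
        · simp [hV]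
        · intro k
          exact (Measurable.ite (measurableSet_lt measurable_const hg) measurable_const
            measurable_const).aemeasurable
    _ ≤ T * V + ∑' k : ℕ, ((2 : ℝ≥0∞) ^ (1 - p)) ^ k * (T * V) := by
        gcongr with k
        exact hterm k
    _ = kolC p * B * V ^ (1 - 1 / p) := by
        rw [ENNReal.tsum_mul_right, mul_assoc, ← hTV, kolC]; ring

theorem kolmogorov {α : Type*} [MeasurableSpace α] (μ : Measure α) {g : α → ℝ≥0∞}
    (hg : Measurable g) {p : ℝ} (hp : 1 < p) (B : ℝ≥0∞)
    (hB : ∀ t : ℝ≥0∞, t * μ {x | t < g x} ^ (1 / p) ≤ B) (Q : Set α)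
    (hQ : μ Q ≠ ∞) :
    ∫⁻ x in Q, g x ∂μ ≤ kolC p * B * μ Q ^ (1 - 1 / p) := by
  have hp0 : 0 < p := by linarith
  have hpe : 0 < 1 - 1 / p := by
    rw [sub_pos, div_lt_one hp0]; exact hp
  by_cases hQ0 : μ Q = 0
  · rw [Measure.restrict_eq_zero.2 hQ0]; simp
  by_cases hBt : B = ∞
  · have h1 : kolC p ≠ 0 := by simp [kolC]
    have h2 : μ Q ^ (1 - 1 / p) ≠ 0 := by
      simp only [ne_eq, ENNReal.rpow_eq_zero_iff, hQ0, hQ, false_and, or_self, not_false_eq_true]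
    rw [hBt, ENNReal.mul_top h1, ENNReal.top_mul h2]; exact le_top
  by_cases hB0 : B = 0
  · have hgae : g =ᵐ[μ] 0 := by
      have h0 := hB
      have : μ {x | 0 < g x} = 0 := by
        have hsub : {x | 0 < g x} ⊆ ⋃ n : ℕ, {x | ((n : ℝ≥0∞) + 1)⁻¹ < g x} := by
          intro x hx
          obtain ⟨n, hn⟩ := ENNReal.exists_inv_nat_lt (ne_of_gt hx)
          refine mem_iUnion.2 ⟨n, lt_of_le_of_lt ?_ hn⟩
          exact ENNReal.inv_le_inv.2 le_self_add
        refine measure_mono_null hsub (measure_iUnion_null fun n => ?_)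
        have := hB ((n : ℝ≥0∞) + 1)⁻¹
        rw [hB0, nonpos_iff_eq_zero, mul_eq_zero] at this
        rcases this with h | h
        · simp at h
        · rw [ENNReal.rpow_eq_zero_iff] at h
          rcases h with h | h
          · exact h.1
          · have : (0:ℝ) < 1 / p := by positivity
            linarith [h.2]
      rw [Filter.EventuallyEq, ae_iff]
      convert this using 3 with x
      simp [pos_iff_ne_zero]
    rw [lintegral_congr_ae (ae_restrict_of_ae hgae)]; simp
  exact kolmogorov_aux μ hg hp B hB Q hQ0 hQ hB0 hBt


theorem holder3 {ι : Type*} (s : Finset ι) (X Y V : ι → ℝ≥0∞) {a b c : ℝ}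
    (ha : 0 ≤ a) (hb : 0 ≤ b) (hc : 0 ≤ c) (habc : a + b + c = 1) :
    ∑ i ∈ s, X i ^ a * Y i ^ b * V i ^ c ≤
      (∑ i ∈ s, X i) ^ a * (∑ i ∈ s, Y i) ^ b * (∑ i ∈ s, V i) ^ c := by
  classical
  let _ : MeasurableSpace s := ⊤
  have h := ENNReal.lintegral_prod_norm_pow_le (μ := (Measure.count : Measure s))
    (Finset.univ : Finset (Fin 3))
    (f := ![fun i => X i, fun i => Y i, fun i => V i])
    (fun i _ => (measurable_from_top).aemeasurable) (p := ![a, b, c])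
    (by simp [Fin.sum_univ_three, habc])
    (by intro i _; fin_cases i <;> simp [ha, hb, hc])
  simp only [Fin.prod_univ_three, lintegral_count] at h
  simp only [tsum_fintype, Matrix.cons_val_zero, Matrix.cons_val_one, Matrix.cons_val] at h
  rw [← Finset.sum_coe_sort s, ← Finset.sum_coe_sort s X, ← Finset.sum_coe_sort s Y,
    ← Finset.sum_coe_sort s V]
  exact h

/-- stopping cubes -/
theorem stopping {α : Type*} (s : Finset (Set α))
    (hnest : ∀ Q ∈ s, ∀ R ∈ s, Q ⊆ R ∨ R ⊆ Q ∨ Disjoint Q R) (a : Set α → ℝ≥0∞) (l : ℝ≥0∞) :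
    ∃ M ⊆ s, (M : Set (Set α)).PairwiseDisjoint id ∧
      (∀ Q ∈ M, ∀ x ∈ Q, l < ∑ R ∈ s, R.indicator (fun _ => a R) x) ∧
      ∀ x, 2 * l < ∑ R ∈ s, R.indicator (fun _ => a R) x →
        ∃ Q ∈ M, x ∈ Q ∧ l < ∑ R ∈ s, R.indicator
          (fun _ => open Classical in if R ⊆ Q then a R else 0) x := by
  classical
  -- the sum over the ancestors
  set up : Set α → ℝ≥0∞ := fun Q => ∑ R ∈ s with Q ⊆ R, a R with hup
  have hA : ∀ x, ∑ R ∈ s, R.indicator (fun _ => a R) x = ∑ R ∈ s with x ∈ R, a R := by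
    intro x
    rw [Finset.sum_filter]
    exact Finset.sum_congr rfl fun R _ => by simp [Set.indicator_apply]
  -- least element of an intersecting subfamily
  have hleast : ∀ T ⊆ s, T.Nonempty → (∃ x, ∀ R ∈ T, x ∈ R) →
      ∃ R₀ ∈ T, ∀ R ∈ T, R₀ ⊆ R := by
    rintro T hT hTn ⟨x, hx⟩
    obtain ⟨R₀, hR₀⟩ := T.exists_minimal hTn
    refine ⟨R₀, hR₀.1, fun R hR => ?_⟩
    rcases hnest R₀ (hT hR₀.1) R (hT hR) with h | h | h
    · exact h
    · exact hR₀.2 hR h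
    · exact absurd (hx R hR) (Set.disjoint_left.1 h (hx R₀ hR₀.1))
  set U := s.filter (fun Q => l < up Q) with hU
  set M := U.filter (fun Q => Maximal (· ∈ U) Q) with hM
  have hMmax : ∀ Q ∈ M, Maximal (· ∈ U) Q := fun Q hQ => (Finset.mem_filter.1 hQ).2
  have hMs : M ⊆ s := (Finset.filter_subset _ _).trans (Finset.filter_subset _ _)
  refine ⟨M, hMs, ?_, ?_, ?_⟩
  · intro Q hQ R hR hQR
    rcases hnest Q (hMs hQ) R (hMs hR) with h | h | h
    · exact absurd ((hMmax Q hQ).eq_of_subset (hMmax R hR).1 h) hQR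
    · exact absurd ((hMmax R hR).eq_of_subset (hMmax Q hQ).1 h).symm hQR
    · exact h
  · intro Q hQ x hx
    rw [hA]
    refine lt_of_lt_of_le (Finset.mem_filter.1 (hMmax Q hQ).1).2 ?_
    refine Finset.sum_le_sum_of_subset fun R hR => ?_
    rw [Finset.mem_filter] at hR ⊢
    exact ⟨hR.1, hR.2 hx⟩
  · intro x hx
    have hl : l < ∑ R ∈ s with x ∈ R, a R := by
      rw [← hA]
      refine lt_of_le_of_lt ?_ hx
      exact le_mul_of_one_le_left' (by norm_num)
    have hTn : (s.filter (x ∈ ·)).Nonempty := by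
      by_contra h
      rw [Finset.not_nonempty_iff_eq_empty] at h
      rw [h] at hl
      simp at hl
    obtain ⟨R₀, hR₀, hR₀l⟩ := hleast _ (Finset.filter_subset _ _) hTn
      ⟨x, fun R hR => (Finset.mem_filter.1 hR).2⟩
    rw [Finset.mem_filter] at hR₀
    have hR₀U : R₀ ∈ U := by
      refine Finset.mem_filter.2 ⟨hR₀.1, lt_of_lt_of_le hl ?_⟩
      refine Finset.sum_le_sum_of_subset fun R hR => ?_
      exact Finset.mem_filter.2 ⟨(Finset.mem_filter.1 hR).1, hR₀l R hR⟩
    obtain ⟨Q, hRQ, hQ⟩ := U.exists_le_maximal hR₀U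
    have hQM : Q ∈ M := Finset.mem_filter.2 ⟨hQ.1, hQ⟩
    have hQs := hMs hQM
    have hxQ : x ∈ Q := hRQ hR₀.2
    refine ⟨Q, hQM, hxQ, ?_⟩
    -- strict ancestors
    have hanc : ∑ R ∈ s with Q ⊂ R, a R ≤ l := by
      by_cases hTn : (s.filter (Q ⊂ ·)).Nonempty
      · obtain ⟨P, hP, hPl⟩ := hleast _ (Finset.filter_subset _ _) hTn
          ⟨x, fun R hR => (Finset.mem_filter.1 hR).2.1 hxQ⟩
        have hP' := Finset.mem_filter.1 hP
        have hPU : P ∉ U := fun h => hP'.2.2 (hQ.2 h hP'.2.1)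
        have : ¬ l < up P := fun h => hPU (Finset.mem_filter.2 ⟨hP'.1, h⟩)
        refine le_trans ?_ (not_lt.1 this)
        refine Finset.sum_le_sum_of_subset fun R hR => ?_
        exact Finset.mem_filter.2 ⟨(Finset.mem_filter.1 hR).1, hPl R hR⟩
      · rw [Finset.not_nonempty_iff_eq_empty] at hTn
        rw [hTn]; simp
    have hsplit : ∑ R ∈ s, R.indicator (fun _ => a R) x ≤
        ∑ R ∈ s with Q ⊂ R, a R +
          ∑ R ∈ s, R.indicator (fun _ => if R ⊆ Q then a R else 0) x := by
      rw [Finset.sum_filter, ← Finset.sum_add_distrib]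
      refine Finset.sum_le_sum fun R hR => ?_
      by_cases hxR : x ∈ R
      · simp only [Set.indicator_of_mem hxR]
        rcases hnest Q hQs R hR with h | h | h
        · by_cases h' : R ⊆ Q
          · simp [h']
          · rw [if_pos ⟨h, h'⟩]; exact le_self_add
        · simp [h]
        · exact absurd hxR (Set.disjoint_left.1 h hxQ)
      · simp [hxR]
    have h3 : l + l < l + ∑ R ∈ s, R.indicator (fun _ => if R ⊆ Q then a R else 0) x := by
      rw [← two_mul]
      exact hx.trans_le (hsplit.trans (by gcongr))
    exact lt_of_add_lt_add_left h3

theorem goodlambda {α : Type*} [MeasurableSpace α] (μ ν1 ν2 : Measure α) (s : Finset (Set α))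
    (hms : ∀ Q ∈ s, MeasurableSet Q)
    (hnest : ∀ Q ∈ s, ∀ R ∈ s, Q ⊆ R ∨ R ⊆ Q ∨ Disjoint Q R) (a : Set α → ℝ≥0∞)
    {e1 e2 e3 : ℝ} (h1 : 0 ≤ e1) (h2 : 0 ≤ e2) (h3 : 0 ≤ e3) (he : e1 + e2 + e3 = 1)
    (C : ℝ≥0∞)
    (htest : ∀ Q ∈ s, ∫⁻ x in Q, (∑ R ∈ s, R.indicator
        (fun _ => open Classical in if R ⊆ Q then a R else 0) x) ∂μ ≤
      C * (ν1 Q ^ e1 * ν2 Q ^ e2) * μ Q ^ e3) (l : ℝ≥0∞) :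
    l * μ {x | 2 * l < ∑ R ∈ s, R.indicator (fun _ => a R) x} ≤
      C * (ν1 univ ^ e1 * ν2 univ ^ e2) *
        μ {x | l < ∑ R ∈ s, R.indicator (fun _ => a R) x} ^ e3 := by
  classical
  obtain ⟨M, hMs, hMd, hM1, hM2⟩ := stopping s hnest a l
  have hmeas : ∀ Q : Set α, Measurable
      (fun x => ∑ R ∈ s, R.indicator (fun _ => if R ⊆ Q then a R else 0) x) := fun Q =>
    Finset.measurable_fun_sum _ fun R hR => measurable_const.indicator (hms R hR)
  have hsum : ∀ ν : Measure α, ∑ Q ∈ M, ν Q = ν (⋃ Q ∈ M, Q) := fun ν =>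
    (measure_biUnion_finset (f := id) hMd (fun Q hQ => hms Q (hMs hQ))).symm
  calc l * μ {x | 2 * l < ∑ R ∈ s, R.indicator (fun _ => a R) x}
      ≤ l * μ (⋃ Q ∈ M, ({x | l ≤ ∑ R ∈ s,
          R.indicator (fun _ => if R ⊆ Q then a R else 0) x} ∩ Q)) := by
        gcongr
        intro x hx
        obtain ⟨Q, hQ, hxQ, hl⟩ := hM2 x hx
        exact mem_iUnion₂.2 ⟨Q, hQ, hl.le, hxQ⟩
    _ ≤ l * ∑ Q ∈ M, μ ({x | l ≤ ∑ R ∈ s,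
          R.indicator (fun _ => if R ⊆ Q then a R else 0) x} ∩ Q) := by
        gcongr; exact measure_biUnion_finset_le _ _
    _ = ∑ Q ∈ M, l * (μ.restrict Q) {x | l ≤ ∑ R ∈ s,
          R.indicator (fun _ => if R ⊆ Q then a R else 0) x} := by
        rw [Finset.mul_sum]
        refine Finset.sum_congr rfl fun Q hQ => ?_
        rw [Measure.restrict_apply (measurableSet_le measurable_const (hmeas Q))]
    _ ≤ ∑ Q ∈ M, C * (ν1 Q ^ e1 * ν2 Q ^ e2 * μ Q ^ e3) := by
        refine Finset.sum_le_sum fun Q hQ => ?_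
        rw [← mul_assoc]
        refine (mul_meas_ge_le_lintegral (hmeas Q) l).trans ?_
        convert htest Q (hMs hQ)
    _ ≤ C * ((∑ Q ∈ M, ν1 Q) ^ e1 * (∑ Q ∈ M, ν2 Q) ^ e2 * (∑ Q ∈ M, μ Q) ^ e3) := by
        rw [← Finset.mul_sum]
        gcongr
        exact holder3 M _ _ _ h1 h2 h3 he
    _ ≤ _ := by
        rw [hsum, hsum, hsum, mul_assoc C]
        gcongr
        · exact subset_univ _
        · exact subset_univ _
        · intro x hx
          obtain ⟨Q, hQ, hxQ⟩ := mem_iUnion₂.1 hx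
          exact hM1 Q hQ x hxQ

theorem weak_finite {α : Type*} [MeasurableSpace α] (μ ν1 ν2 : Measure α) (s : Finset (Set α))
    (hms : ∀ Q ∈ s, MeasurableSet Q) (hμ : ∀ Q ∈ s, μ Q ≠ ∞)
    (hnest : ∀ Q ∈ s, ∀ R ∈ s, Q ⊆ R ∨ R ⊆ Q ∨ Disjoint Q R) (a : Set α → ℝ≥0∞)
    {p e1 e2 : ℝ} (hp : 1 < p) (h1 : 0 ≤ e1) (h2 : 0 ≤ e2) (he : e1 + e2 = 1 / p)
    (C : ℝ≥0∞)
    (htest : ∀ Q ∈ s, ∫⁻ x in Q, (∑ R ∈ s, R.indicator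
        (fun _ => open Classical in if R ⊆ Q then a R else 0) x) ∂μ ≤
      C * (ν1 Q ^ e1 * ν2 Q ^ e2) * μ Q ^ (1 - 1 / p)) (t : ℝ≥0∞) :
    t * μ {x | t < ∑ R ∈ s, R.indicator (fun _ => a R) x} ^ (1 / p) ≤
      2 ^ p * (C * (ν1 univ ^ e1 * ν2 univ ^ e2)) := by
  classical
  have hp0 : 0 < p := by linarith
  have hip : 0 < 1 / p := by positivity
  have hpe : 0 < 1 - 1 / p := by rw [sub_pos, div_lt_one hp0]; exact hp
  set B := C * (ν1 univ ^ e1 * ν2 univ ^ e2) with hB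
  by_cases hBt : B = ∞
  · rw [hBt, ENNReal.mul_top]
    · exact le_top
    · simp [ENNReal.rpow_eq_zero_iff]
  set A : α → ℝ≥0∞ := fun x => ∑ R ∈ s, R.indicator (fun _ => a R) x with hA
  set Φ : ℝ≥0∞ → ℝ≥0∞ := fun t => t * μ {x | t < A x} ^ (1 / p) with hΦ
  set N := ⨆ t, Φ t with hN
  -- single cubes
  have hcube : ∀ Q ∈ s, a Q * μ Q ^ (1 / p) ≤ B := by
    intro Q hQ
    by_cases hQ0 : μ Q = 0
    · rw [hQ0, ENNReal.zero_rpow_of_pos hip]; simp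
    have h3 : a Q * μ Q ≤ B * μ Q ^ (1 - 1 / p) := by
      calc a Q * μ Q = ∫⁻ x in Q, a Q ∂μ := by simp
        _ ≤ ∫⁻ x in Q, (∑ R ∈ s, R.indicator (fun _ => if R ⊆ Q then a R else 0) x) ∂μ := by
            refine setLIntegral_mono' (hms Q hQ) fun x hx => ?_
            refine le_trans ?_ (Finset.single_le_sum (f := fun R => R.indicator
              (fun _ => if R ⊆ Q then a R else 0) x) (fun _ _ => zero_le) hQ)
            simp [hx]
        _ ≤ C * (ν1 Q ^ e1 * ν2 Q ^ e2) * μ Q ^ (1 - 1 / p) := by convert htest Q hQ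
        _ ≤ _ := by
            rw [hB]; gcongr
            · exact subset_univ _
            · exact subset_univ _
    have h0 : μ Q ^ (1 - 1 / p) ≠ 0 := by
      simp only [ne_eq, ENNReal.rpow_eq_zero_iff, hQ0, hμ Q hQ, false_and, or_self,
        not_false_eq_true]
    have ht : μ Q ^ (1 - 1 / p) ≠ ∞ := ENNReal.rpow_ne_top_of_nonneg hpe.le (hμ Q hQ)
    refine (ENNReal.mul_le_mul_iff_left h0 ht).1 ?_
    rw [mul_assoc, ← ENNReal.rpow_add _ _ hQ0 (hμ Q hQ)]
    simpa using h3
  -- finiteness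
  have hNt : N ≠ ∞ := by
    have hbd : ∀ t, Φ t ≤ (s.card * B) * (s.card : ℝ≥0∞) ^ (1 / p) := by
      intro t
      by_cases ht0 : t = 0
      · simp [hΦ, ht0]
      by_cases htt : t = ∞
      · simp [hΦ, htt, hp0]
      have hcov : {x | t < A x} ⊆ ⋃ Q ∈ s.filter (fun Q => t < s.card * a Q), Q := by
        intro x hx
        by_contra hcon
        have hno : ∀ Q ∈ s, x ∈ Q → s.card * a Q ≤ t := by
          intro Q hQ hxQ
          by_contra h
          exact hcon (mem_iUnion₂.2 ⟨Q, Finset.mem_filter.2 ⟨hQ, not_le.1 h⟩, hxQ⟩)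
        have hn0 : (s.card : ℝ≥0∞) ≠ 0 := by
          intro h
          rw [Nat.cast_eq_zero, Finset.card_eq_zero] at h
          simp [hA, h] at hx
        have : A x ≤ t := by
          calc A x ≤ ∑ R ∈ s, t / s.card := by
                refine Finset.sum_le_sum fun R hR => ?_
                by_cases hxR : x ∈ R
                · rw [Set.indicator_of_mem hxR,
                    ENNReal.le_div_iff_mul_le (Or.inl hn0) (Or.inl (by simp)), mul_comm]
                  exact hno R hR hxR
                · simp [hxR]
            _ = t := by
                rw [Finset.sum_const, nsmul_eq_mul, ENNReal.mul_div_cancel hn0 (by simp)]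
        exact absurd hx (not_lt.2 this)
      have hmu : μ {x | t < A x} ≤ s.card * ((s.card * B) / t) ^ p := by
        calc μ {x | t < A x} ≤ ∑ Q ∈ s.filter (fun Q => t < s.card * a Q), μ Q :=
              (measure_mono hcov).trans (measure_biUnion_finset_le _ _)
          _ ≤ ∑ Q ∈ s.filter (fun Q => t < s.card * a Q), ((s.card * B) / t) ^ p := by
              refine Finset.sum_le_sum fun Q hQ => ?_
              rw [Finset.mem_filter] at hQ
              have : μ Q ^ (1 / p) ≤ (s.card * B) / t := by
                rw [ENNReal.le_div_iff_mul_le (Or.inl ht0) (Or.inl htt)]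
                calc μ Q ^ (1 / p) * t ≤ μ Q ^ (1 / p) * (s.card * a Q) := by
                      gcongr; exact hQ.2.le
                  _ = s.card * (a Q * μ Q ^ (1 / p)) := by ring
                  _ ≤ _ := by gcongr; exact hcube Q hQ.1
              calc μ Q = (μ Q ^ (1 / p)) ^ p := by
                    rw [← ENNReal.rpow_mul]; simp [hp0.ne']
                _ ≤ _ := by gcongr
          _ ≤ ∑ Q ∈ s, ((s.card * B) / t) ^ p :=
              Finset.sum_le_sum_of_subset (Finset.filter_subset _ _)
          _ = _ := by simp
      calc Φ t ≤ t * (s.card * ((s.card * B) / t) ^ p) ^ (1 / p) := by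
            simp only [hΦ]; gcongr
        _ = t * ((s.card * B) / t) * (s.card : ℝ≥0∞) ^ (1 / p) := by
            rw [ENNReal.mul_rpow_of_nonneg _ _ hip.le, ← ENNReal.rpow_mul,
              mul_one_div_cancel hp0.ne', ENNReal.rpow_one]; ring
        _ = _ := by rw [ENNReal.mul_div_cancel ht0 htt]
    refine ne_top_of_le_ne_top ?_ (iSup_le hbd)
    exact ENNReal.mul_ne_top (ENNReal.mul_ne_top (by simp) hBt)
      (ENNReal.rpow_ne_top_of_nonneg hip.le (by simp))
  -- main iteration
  have hmain : ∀ t, Φ t ^ p ≤ 2 ^ p * B * N ^ (p - 1) := by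
    intro t
    obtain ⟨l, rfl⟩ : ∃ l, t = 2 * l :=
      ⟨t / 2, by rw [ENNReal.mul_div_cancel (by simp) (by simp)]⟩
    by_cases hl0 : l = 0
    · simp [hΦ, hl0, hp0]
    by_cases hlt : l = ∞
    · have : {x | (2 * l : ℝ≥0∞) < A x} = ∅ := by
        ext x; simp [hlt, ENNReal.mul_top]
      simp [hΦ, this, hp0]
    have hg := goodlambda μ ν1 ν2 s hms hnest a h1 h2 hpe.le (by rw [he]; ring) C htest l
    have hpp : l ^ p = l ^ (p - 1) * l := by
      conv_rhs => rw [← ENNReal.rpow_one l, ← ENNReal.rpow_mul, one_mul,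
        ← ENNReal.rpow_add _ _ hl0 hlt]
      congr 1; ring
    calc Φ (2 * l) ^ p = 2 ^ p * (l ^ (p - 1) * (l * μ {x | 2 * l < A x})) := by
          simp only [hΦ]
          rw [ENNReal.mul_rpow_of_nonneg _ _ hp0.le, ENNReal.mul_rpow_of_nonneg _ _ hp0.le,
            ← ENNReal.rpow_mul, one_div_mul_cancel hp0.ne', ENNReal.rpow_one, hpp]; ring
      _ ≤ 2 ^ p * (l ^ (p - 1) * (B * μ {x | l < A x} ^ (1 - 1 / p))) := by gcongr
      _ = 2 ^ p * B * (Φ l) ^ (p - 1) := by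
          simp only [hΦ]
          rw [ENNReal.mul_rpow_of_nonneg _ _ (by linarith), ← ENNReal.rpow_mul]
          have : 1 / p * (p - 1) = 1 - 1 / p := by field_simp
          rw [this]; ring
      _ ≤ _ := by
          gcongr
          exact le_iSup Φ l
  have hNp : N ^ p ≤ 2 ^ p * B * N ^ (p - 1) := by
    have : N ≤ (2 ^ p * B * N ^ (p - 1)) ^ (1 / p) := by
      refine iSup_le fun t => ?_
      rw [one_div, ENNReal.le_rpow_inv_iff hp0]
      exact hmain t
    rwa [one_div, ENNReal.le_rpow_inv_iff hp0] at this
  refine (le_iSup Φ t).trans ?_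
  change N ≤ _
  by_cases hN0 : N = 0
  · rw [hN0]; exact zero_le
  have h0 : N ^ (p - 1) ≠ 0 := by
    simp only [ne_eq, ENNReal.rpow_eq_zero_iff, hN0, hNt, false_and, or_self, not_false_eq_true]
  have ht : N ^ (p - 1) ≠ ∞ := ENNReal.rpow_ne_top_of_nonneg (by linarith) hNt
  refine (ENNReal.mul_le_mul_iff_left h0 ht).1 ?_
  refine le_trans (le_of_eq ?_) hNp
  conv_lhs => rw [← ENNReal.rpow_one N, ← ENNReal.rpow_mul, one_mul,
        ← ENNReal.rpow_add _ _ hN0 hNt]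
  congr 1; ring

theorem cube_eq_pi {n : ℕ} {Q : Set (Rn n)} {h : ℝ} (hQ : HasSide Q h) :
    ∃ c : Rn n, Q = Set.pi univ fun i => Ico (c i) (c i + h) := by
  obtain ⟨c, rfl⟩ := hQ
  exact ⟨c, by ext x; simp⟩

theorem cube_measurable {n : ℕ} {Q : Set (Rn n)} {h : ℝ} (hQ : HasSide Q h) :
    MeasurableSet Q := by
  obtain ⟨c, rfl⟩ := cube_eq_pi hQ
  exact MeasurableSet.univ_pi fun i => measurableSet_Ico

theorem cube_volume_pos {n : ℕ} {Q : Set (Rn n)} {h : ℝ} (hh : 0 < h) (hQ : HasSide Q h) :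
    volume Q ≠ 0 := by
  obtain ⟨c, rfl⟩ := cube_eq_pi hQ
  rw [volume_pi_pi]
  simp [hh]

theorem sparse_countable {n : ℕ} {S : Set (Set (Rn n))} (hS : IsSparse S)
    (hpos : ∀ Q ∈ S, volume Q ≠ 0) : S.Countable := by
  obtain ⟨E, hE, hd⟩ := hS
  have h := Measure.countable_meas_pos_of_disjoint_iUnion (μ := (volume : Measure (Rn n)))
    (As := fun Q : S => E Q) (fun Q => (hE Q Q.2).2.1)
    (fun Q R hQR => hd Q.2 R.2 (fun h => hQR (Subtype.ext h)))
  have huniv : {Q : S | 0 < volume (E Q)} = univ := by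
    ext Q
    simp only [mem_ofPred_eq, mem_univ, iff_true, pos_iff_ne_zero]
    intro h0
    have := (hE Q Q.2).2.2
    rw [h0] at this
    exact hpos Q Q.2 (by simpa using this)
  rw [huniv] at h
  exact Set.countable_coe_iff.1 (Set.countable_univ_iff.1 h)

theorem mass_eq {n : ℕ} (v : Rn n → ℝ≥0∞) (E : Set (Rn n)) :
    mass v E = (volume.withDensity v) E := (withDensity_apply' _ _).symm

theorem vweight_mass_ne_top {n : ℕ} {p p1 p2 : ℝ} (hp0 : 0 < p) (hp1 : 0 < p1) (hp2 : 0 < p2)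
    (hp : 1 / p = 1 / p1 + 1 / p2) {w1 w2 : Rn n → ℝ≥0∞} (h1 : IsWeight w1) (h2 : IsWeight w2)
    {Q : Set (Rn n)} (hQ : IsCube Q) : mass (vweight p p1 p2 w1 w2) Q ≠ ∞ := by
  have hs : p / p1 + p / p2 = 1 := by
    have : p * (1 / p) = p * (1 / p1 + 1 / p2) := by rw [hp]
    rw [mul_one_div_cancel hp0.ne'] at this
    rw [this]; ring
  refine ne_top_of_le_ne_top (ENNReal.add_ne_top.2 ⟨h1.2 Q hQ, h2.2 Q hQ⟩) ?_
  rw [← lintegral_add_left h1.1]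
  refine lintegral_mono fun x => ?_
  calc vweight p p1 p2 w1 w2 x ≤ (w1 x + w2 x) ^ (p / p1) * (w1 x + w2 x) ^ (p / p2) := by
        unfold vweight
        gcongr
        · exact le_self_add
        · exact le_add_self
    _ = w1 x + w2 x := by
        rw [← ENNReal.rpow_add_of_nonneg _ _ (by positivity) (by positivity), hs,
          ENNReal.rpow_one]

theorem eAbs_indicator {n : ℕ} (Q : Set (Rn n)) (f : Rn n → ℝ) :
    eAbs (Q.indicator f) = Q.indicator (eAbs f) := by
  ext x
  by_cases hx : x ∈ Q <;> simp [eAbs, hx]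

theorem eAbs_measurable {n : ℕ} {f : Rn n → ℝ} (hf : Measurable f) : Measurable (eAbs f) :=
  hf.nnnorm.coe_nnreal_ennreal

/-- the measure `|f|^q σ dx` -/
def powMeasure {n : ℕ} (f : Rn n → ℝ) (q : ℝ) (σ : Rn n → ℝ≥0∞) : Measure (Rn n) :=
  volume.withDensity fun x => eAbs f x ^ q * σ x

theorem lpNorm_eq {n : ℕ} (f : Rn n → ℝ) (q : ℝ) (σ : Rn n → ℝ≥0∞) :
    lpNorm (eAbs f) q σ = powMeasure f q σ univ ^ (1 / q) := by
  rw [powMeasure, withDensity_apply' _ _, Measure.restrict_univ, _root_.lpNorm]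

theorem lpNorm_indicator_eq {n : ℕ} (f : Rn n → ℝ) {q : ℝ} (hq : 0 < q) (σ : Rn n → ℝ≥0∞)
    {Q : Set (Rn n)} (hQ : MeasurableSet Q) :
    lpNorm (eAbs (Q.indicator f)) q σ = powMeasure f q σ Q ^ (1 / q) := by
  rw [powMeasure, withDensity_apply' _ _, _root_.lpNorm, eAbs_indicator, ← lintegral_indicator hQ]
  congr 2
  ext x
  by_cases hx : x ∈ Q <;> simp [hx, hq]

theorem lpNorm_indicator_le {n : ℕ} (f : Rn n → ℝ) {q : ℝ} (hq : 0 < q) (σ : Rn n → ℝ≥0∞)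
    {Q : Set (Rn n)} (hQ : MeasurableSet Q) :
    lpNorm (eAbs (Q.indicator f)) q σ ≤ lpNorm (eAbs f) q σ := by
  rw [lpNorm_indicator_eq f hq σ hQ, lpNorm_eq]
  gcongr
  exact subset_univ _

theorem memLpW_indicator {n : ℕ} {f : Rn n → ℝ} {q : ℝ} (hq : 0 < q) {σ : Rn n → ℝ≥0∞}
    {Q : Set (Rn n)} (hQ : MeasurableSet Q) (hf : MemLpW f q σ) :
    MemLpW (Q.indicator f) q σ :=
  ⟨hf.1.indicator hQ, ne_top_of_le_ne_top hf.2 (lpNorm_indicator_le f hq σ hQ)⟩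

theorem ind_mul {n : ℕ} (Q : Set (Rn n)) (f : Rn n → ℝ) (σ : Rn n → ℝ≥0∞) :
    (fun x => eAbs (Q.indicator f) x * σ x) = Q.indicator fun x => eAbs f x * σ x := by
  ext x
  by_cases hx : x ∈ Q <;> simp [eAbs, hx]

theorem avg_indicator {n : ℕ} (g : Rn n → ℝ≥0∞) {R Q : Set (Rn n)} (hQ : MeasurableSet Q)
    (h : R ⊆ Q) : avg (Q.indicator g) R = avg g R := by
  unfold avg mass
  rw [lintegral_indicator hQ, Measure.restrict_restrict hQ, inter_eq_right.2 h]

theorem sparseOp_measurable {n : ℕ} {S : Set (Set (Rn n))} (hS : S.Countable)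
    (hm : ∀ Q ∈ S, MeasurableSet Q) (g1 g2 : Rn n → ℝ≥0∞) : Measurable (sparseOp S g1 g2) := by
  have := hS.to_subtype
  unfold sparseOp
  exact Measurable.ennreal_tsum fun Q => measurable_const.indicator (hm Q Q.2)

theorem one_div_conj {p : ℝ} (hp : 1 < p) : 1 / conj p = 1 - 1 / p := by
  unfold conj
  have : p - 1 ≠ 0 := by linarith
  field_simp

theorem setLIntegral_vw {n : ℕ} {v g : Rn n → ℝ≥0∞} (hv : Measurable v) (hg : Measurable g)
    {Q : Set (Rn n)} (hQ : MeasurableSet Q) :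
    ∫⁻ x in Q, g x * v x = ∫⁻ x in Q, g x ∂(volume.withDensity v) := by
  rw [setLIntegral_withDensity_eq_lintegral_mul₀ hv.aemeasurable hg.aemeasurable hQ]
  exact lintegral_congr fun x => mul_comm _ _

theorem weak_of_testing {n : ℕ} {p p1 p2 : ℝ}
    (hp1 : 1 < p1) (hp2 : 1 < p2) (hp : 1 / p = 1 / p1 + 1 / p2) (hp0 : 1 < p)
    (v σ1 σ2 : Rn n → ℝ≥0∞) (hv : Measurable v)
    (S : Set (Set (Rn n))) (hSc : S.Countable) (hms : ∀ Q ∈ S, MeasurableSet Q)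
    (hnest : ∀ Q ∈ S, ∀ R ∈ S, Q ⊆ R ∨ R ⊆ Q ∨ Disjoint Q R)
    (hfin : ∀ Q ∈ S, mass v Q ≠ ∞) (C : ℝ≥0∞)
    (htest : ∀ Q ∈ S, ∀ f1 f2 : Rn n → ℝ, MemLpW f1 p1 σ1 → MemLpW f2 p2 σ2 →
      (∫⁻ x in Q, sparseOp S (Q.indicator fun y => eAbs f1 y * σ1 y)
          (Q.indicator fun y => eAbs f2 y * σ2 y) x * v x) ≤
        C * (lpNorm (eAbs f1) p1 σ1 * lpNorm (eAbs f2) p2 σ2) * mass v Q ^ (1 / conj p))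
    (f1 f2 : Rn n → ℝ) (hf1 : MemLpW f1 p1 σ1) (hf2 : MemLpW f2 p2 σ2) :
    wkNorm (sparseOp S (fun x => eAbs f1 x * σ1 x) (fun x => eAbs f2 x * σ2 x)) p v ≤
      2 ^ p * (C * (lpNorm (eAbs f1) p1 σ1 * lpNorm (eAbs f2) p2 σ2)) := by
  classical
  have hpp : 0 < p := by linarith
  have hq1 : 0 < p1 := by linarith
  have hq2 : 0 < p2 := by linarith
  have := hSc.to_subtype
  set g1 : Rn n → ℝ≥0∞ := fun x => eAbs f1 x * σ1 x with hg1
  set g2 : Rn n → ℝ≥0∞ := fun x => eAbs f2 x * σ2 x with hg2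
  set a : Set (Rn n) → ℝ≥0∞ := fun Q => avg g1 Q * avg g2 Q with ha
  set μ : Measure (Rn n) := volume.withDensity v with hμ
  set B := 2 ^ p * (C * (lpNorm (eAbs f1) p1 σ1 * lpNorm (eAbs f2) p2 σ2)) with hB
  -- bound for the finite subfamilies
  have hF : ∀ (F : Finset S) (t : ℝ≥0∞),
      t * μ {x | t < ∑ Q ∈ F, (Q : Set (Rn n)).indicator (fun _ => a Q) x} ^ (1 / p) ≤ B := by
    intro F t
    have hsS : ∀ Q ∈ F.map (Function.Embedding.subtype _), Q ∈ S := by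
      intro Q hQ
      obtain ⟨R, -, rfl⟩ := Finset.mem_map.1 hQ
      exact R.2
    have h := weak_finite μ (powMeasure f1 p1 σ1) (powMeasure f2 p2 σ2)
      (F.map (Function.Embedding.subtype _)) (fun Q hQ => hms Q (hsS Q hQ))
      (fun Q hQ => by rw [hμ, ← mass_eq]; exact hfin Q (hsS Q hQ))
      (fun Q hQ R hR => hnest Q (hsS Q hQ) R (hsS R hR)) a hp0
      (e1 := 1 / p1) (e2 := 1 / p2) (by positivity) (by positivity) hp.symm C ?_ t
    · rw [← lpNorm_eq, ← lpNorm_eq] at h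
      simpa only [Finset.sum_map, Function.Embedding.subtype_apply] using h
    · intro Q hQ
      have hQS := hsS Q hQ
      have hQm := hms Q hQS
      have ht := htest Q hQS (Q.indicator f1) (Q.indicator f2)
        (memLpW_indicator hq1 hQm hf1) (memLpW_indicator hq2 hQm hf2)
      rw [ind_mul, ind_mul, indicator_indicator, indicator_indicator, inter_self,
        lpNorm_indicator_eq f1 hq1 σ1 hQm, lpNorm_indicator_eq f2 hq2 σ2 hQm, one_div_conj hp0,
        mass_eq, setLIntegral_vw hv (sparseOp_measurable hSc hms _ _) hQm] at ht
      refine le_trans (lintegral_mono fun x => ?_) ht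
      rw [Finset.sum_map]
      refine le_trans (Finset.sum_le_sum fun R _ => ?_)
        (ENNReal.sum_le_tsum (f := fun R : S => (R : Set (Rn n)).indicator
          (fun _ => avg (Q.indicator g1) R * avg (Q.indicator g2) R) x) F)
      refine Set.indicator_le_indicator ?_
      by_cases hR : (R : Set (Rn n)) ⊆ Q
      · refine (if_pos hR).le.trans ?_
        rw [avg_indicator _ hQm hR, avg_indicator _ hQm hR]
        exact le_rfl
      · exact (if_neg hR).le.trans zero_le
  refine iSup_le fun t => ?_
  by_cases ht0 : t = 0
  · simp [ht0]
  by_cases htt : t = ∞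
  · simp [htt, mass, hpp]
  have hset : {x | t < sparseOp S g1 g2 x} = ⋃ F : Finset S,
      {x | t < ∑ Q ∈ F, (Q : Set (Rn n)).indicator (fun _ => a Q) x} := by
    ext x
    simp only [mem_ofPred_eq, mem_iUnion, sparseOp, ENNReal.tsum_eq_iSup_sum, lt_iSup_iff, ha]
  have hdir : Directed (· ⊆ ·) fun F : Finset S =>
      {x | t < ∑ Q ∈ F, (Q : Set (Rn n)).indicator (fun _ => a Q) x} := by
    refine Monotone.directed_le fun F G hFG x hx => ?_
    have hx' : t < ∑ Q ∈ F, (Q : Set (Rn n)).indicator (fun _ => a Q) x := hx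
    have hx2 : t < ∑ Q ∈ G, (Q : Set (Rn n)).indicator (fun _ => a Q) x :=
      lt_of_lt_of_le hx' (Finset.sum_le_sum_of_subset hFG)
    exact hx2
  have hle : mass v {x | t < sparseOp S g1 g2 x} ≤ (B / t) ^ p := by
    rw [mass_eq, hset, hdir.measure_iUnion]
    refine iSup_le fun F => ?_
    have h1 : μ {x | t < ∑ Q ∈ F, (Q : Set (Rn n)).indicator (fun _ => a Q) x} ^ (1 / p)
        ≤ B / t := by
      rw [ENNReal.le_div_iff_mul_le (Or.inl ht0) (Or.inl htt), mul_comm]; exact hF F t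
    rw [one_div, ENNReal.rpow_inv_le_iff hpp] at h1
    exact h1
  calc t * mass v {x | t < sparseOp S g1 g2 x} ^ (1 / p) ≤ t * ((B / t) ^ p) ^ (1 / p) := by
        gcongr
    _ = B := by
        rw [← ENNReal.rpow_mul, mul_one_div_cancel hpp.ne', ENNReal.rpow_one,
          ENNReal.mul_div_cancel ht0 htt]

theorem testing_of_weak {n : ℕ} {p p1 p2 : ℝ}
    (hp1 : 1 < p1) (hp2 : 1 < p2) (hp0 : 1 < p)
    (v σ1 σ2 : Rn n → ℝ≥0∞) (hv : Measurable v)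
    (S : Set (Set (Rn n))) (hSc : S.Countable) (hms : ∀ Q ∈ S, MeasurableSet Q)
    (hfin : ∀ Q ∈ S, mass v Q ≠ ∞) (C : ℝ≥0∞)
    (hweak : ∀ f1 f2 : Rn n → ℝ, MemLpW f1 p1 σ1 → MemLpW f2 p2 σ2 →
      wkNorm (sparseOp S (fun x => eAbs f1 x * σ1 x) (fun x => eAbs f2 x * σ2 x)) p v ≤
        C * (lpNorm (eAbs f1) p1 σ1 * lpNorm (eAbs f2) p2 σ2))
    (Q : Set (Rn n)) (hQ : Q ∈ S)
    (f1 f2 : Rn n → ℝ) (hf1 : MemLpW f1 p1 σ1) (hf2 : MemLpW f2 p2 σ2) :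
    (∫⁻ x in Q, sparseOp S (Q.indicator fun y => eAbs f1 y * σ1 y)
          (Q.indicator fun y => eAbs f2 y * σ2 y) x * v x) ≤
      kolC p * (C * (lpNorm (eAbs f1) p1 σ1 * lpNorm (eAbs f2) p2 σ2)) *
        mass v Q ^ (1 / conj p) := by
  have hq1 : 0 < p1 := by linarith
  have hq2 : 0 < p2 := by linarith
  have hQm := hms Q hQ
  have hw := hweak (Q.indicator f1) (Q.indicator f2)
    (memLpW_indicator hq1 hQm hf1) (memLpW_indicator hq2 hQm hf2)
  rw [ind_mul, ind_mul] at hw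
  have hw' : wkNorm (sparseOp S (Q.indicator fun y => eAbs f1 y * σ1 y)
      (Q.indicator fun y => eAbs f2 y * σ2 y)) p v ≤
      C * (lpNorm (eAbs f1) p1 σ1 * lpNorm (eAbs f2) p2 σ2) := by
    refine hw.trans ?_
    gcongr
    · exact lpNorm_indicator_le f1 hq1 σ1 hQm
    · exact lpNorm_indicator_le f2 hq2 σ2 hQm
  have hmeas := sparseOp_measurable hSc hms (Q.indicator fun y => eAbs f1 y * σ1 y)
      (Q.indicator fun y => eAbs f2 y * σ2 y)
  rw [setLIntegral_vw hv hmeas hQm, one_div_conj hp0, mass_eq]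
  refine kolmogorov _ hmeas hp0 _ (fun t => ?_) Q (by rw [← mass_eq]; exact hfin Q hQ)
  rw [← mass_eq]
  exact (le_iSup (fun t : ℝ≥0∞ => t * mass v {x | t < sparseOp S _ _ x} ^ (1 / p)) t).trans hw'

end


/-- Equivalence, with comparable constants, between the global weak-type bound and
the local testing bound for the bilinear sparse operator. -/
theorem statement4 {n : ℕ} (p p1 p2 : ℝ)
    (hp1 : 1 < p1) (hp2 : 1 < p2) (hp : 1 / p = 1 / p1 + 1 / p2) (hp0 : 1 < p) :
    ∃ c : ℝ≥0∞, c ≠ ∞ ∧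
      ∀ w1 w2 : Rn n → ℝ≥0∞, IsWeight w1 → IsWeight w2 →
        APconst p p1 p2 w1 w2 ≠ ∞ →
        ∀ D S : Set (Set (Rn n)), IsDyadicSystem D → S ⊆ D → IsSparse S →
          ∀ C : ℝ≥0∞,
            ((∀ f1 f2 : Rn n → ℝ,
                MemLpW f1 p1 (dualW p1 w1) → MemLpW f2 p2 (dualW p2 w2) →
                wkNorm
                    (sparseOp S (fun x => eAbs f1 x * dualW p1 w1 x)
                      (fun x => eAbs f2 x * dualW p2 w2 x)) p
                    (vweight p p1 p2 w1 w2) ≤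
                  C * (lpNorm (eAbs f1) p1 (dualW p1 w1) *
                    lpNorm (eAbs f2) p2 (dualW p2 w2))) →
              ∀ Q ∈ S, ∀ f1 f2 : Rn n → ℝ,
                MemLpW f1 p1 (dualW p1 w1) → MemLpW f2 p2 (dualW p2 w2) →
                (∫⁻ x in Q,
                    sparseOp S (Q.indicator fun y => eAbs f1 y * dualW p1 w1 y)
                      (Q.indicator fun y => eAbs f2 y * dualW p2 w2 y) x *
                      vweight p p1 p2 w1 w2 x) ≤
                  c * C * (lpNorm (eAbs f1) p1 (dualW p1 w1) *
                      lpNorm (eAbs f2) p2 (dualW p2 w2)) *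
                    mass (vweight p p1 p2 w1 w2) Q ^ (1 / conj p)) ∧
            ((∀ Q ∈ S, ∀ f1 f2 : Rn n → ℝ,
                MemLpW f1 p1 (dualW p1 w1) → MemLpW f2 p2 (dualW p2 w2) →
                (∫⁻ x in Q,
                    sparseOp S (Q.indicator fun y => eAbs f1 y * dualW p1 w1 y)
                      (Q.indicator fun y => eAbs f2 y * dualW p2 w2 y) x *
                      vweight p p1 p2 w1 w2 x) ≤
                  C * (lpNorm (eAbs f1) p1 (dualW p1 w1) *
                      lpNorm (eAbs f2) p2 (dualW p2 w2)) *
                    mass (vweight p p1 p2 w1 w2) Q ^ (1 / conj p)) →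
              ∀ f1 f2 : Rn n → ℝ,
                MemLpW f1 p1 (dualW p1 w1) → MemLpW f2 p2 (dualW p2 w2) →
                wkNorm
                    (sparseOp S (fun x => eAbs f1 x * dualW p1 w1 x)
                      (fun x => eAbs f2 x * dualW p2 w2 x)) p
                    (vweight p p1 p2 w1 w2) ≤
                  c * C * (lpNorm (eAbs f1) p1 (dualW p1 w1) *
                    lpNorm (eAbs f2) p2 (dualW p2 w2))) := by
  refine ⟨kolC p + 2 ^ p, ?_, ?_⟩
  · refine ENNReal.add_ne_top.2 ⟨kolC_ne_top hp0, ?_⟩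
    exact ENNReal.rpow_ne_top_of_nonneg (by linarith) (by simp)
  intro w1 w2 hw1 hw2 _ D S hD hSD hS C
  have hside : ∀ Q ∈ S, ∃ h : ℝ, 0 < h ∧ HasSide Q h := by
    intro Q hQ
    obtain ⟨k, hk⟩ := hD.1 Q (hSD hQ)
    exact ⟨_, by positivity, hk⟩
  have hms : ∀ Q ∈ S, MeasurableSet Q := fun Q hQ => by
    obtain ⟨h, -, hh⟩ := hside Q hQ
    exact cube_measurable hh
  have hSc : S.Countable := sparse_countable hS fun Q hQ => by
    obtain ⟨h, h0, hh⟩ := hside Q hQ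
    exact cube_volume_pos h0 hh
  have hfin : ∀ Q ∈ S, mass (vweight p p1 p2 w1 w2) Q ≠ ∞ := fun Q hQ =>
    vweight_mass_ne_top (by linarith) (by linarith) (by linarith) hp hw1 hw2 (hside Q hQ)
  have hv : Measurable (vweight p p1 p2 w1 w2) :=
    (hw1.1.pow_const _).mul (hw2.1.pow_const _)
  have hnest : ∀ Q ∈ S, ∀ R ∈ S, Q ⊆ R ∨ R ⊆ Q ∨ Disjoint Q R := by
    intro Q hQ R hR
    rcases hD.2.1 Q (hSD hQ) R (hSD hR) with h | h | h
    · exact Or.inl (inter_eq_left.1 h)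
    · exact Or.inr (Or.inl (inter_eq_right.1 h))
    · exact Or.inr (Or.inr (disjoint_iff_inter_eq_empty.2 h))
  refine ⟨fun hweak Q hQ f1 f2 hf1 hf2 => ?_, fun htest f1 f2 hf1 hf2 => ?_⟩
  · refine (testing_of_weak hp1 hp2 hp0 _ _ _ hv S hSc hms hfin C hweak Q hQ f1 f2 hf1
      hf2).trans ?_
    rw [← mul_assoc (kolC p)]
    gcongr
    exact le_self_add
  · refine (weak_of_testing hp1 hp2 hp hp0 _ _ _ hv S hSc hms hnest hfin C htest f1 f2 hf1
      hf2).trans ?_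
    rw [← mul_assoc]
    gcongr
    exact le_add_self
end

section
/- Let $\vec{P}=(p_1,p_2)$ with $1<p_1,p_2<\infty$, $1/p=1/p_1+1/p_2$ and $1<p<\infty$, and let $\vec{w}=(w_1,w_2)\in A_{\vec{P}}$. Then there is a constant $C$ depending only on $n$ and $\vec{P}$ such that for every sparse family $\mathcal{S}$ of cubes, $\Big\|\sum_{Q\in\mathcal{S}}\langle\sigma_1\rangle_Q\langle\sigma_2\rangle_Q\chi_Q\Big\|_{L^p(v_{\vec{w}})}\ \le\ C\,[\vec{w}]_{A_{\vec{P}}}^{1/p}\Big(\sum_{Q\in\mathcal{S}}\langle\sigma_1\rangle_Q^{p/p_1}\langle\sigma_2\rangle_Q^{p/p_2}|Q|\Big)^{1/p}$. -/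
open MeasureTheory Set ENNReal

structure GoodFam {n : ℕ} (S : Finset (Set (Rn n))) : Prop where
  meas : ∀ Q ∈ S, MeasurableSet Q
  pos : ∀ Q ∈ S, volume Q ≠ 0
  fin : ∀ Q ∈ S, volume Q ≠ ∞
  lam : ∀ Q ∈ S, ∀ R ∈ S, Q ⊆ R ∨ R ⊆ Q ∨ Disjoint Q R
  sparse : ∃ E : Set (Rn n) → Set (Rn n),
    (∀ Q ∈ S, E Q ⊆ Q ∧ MeasurableSet (E Q) ∧ volume Q ≤ 2 * volume (E Q)) ∧
    (S : Set (Set (Rn n))).Pairwise fun Q R => Disjoint (E Q) (E R)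

lemma GoodFam.mono {n : ℕ} {S T : Finset (Set (Rn n))} (h : GoodFam S) (hT : T ⊆ S) :
    GoodFam T := by
  obtain ⟨E, h1, h2⟩ := h.sparse
  exact ⟨fun Q hQ => h.meas Q (hT hQ), fun Q hQ => h.pos Q (hT hQ), fun Q hQ => h.fin Q (hT hQ),
    fun Q hQ R hR => h.lam Q (hT hQ) R (hT hR), E, fun Q hQ => h1 Q (hT hQ),
    h2.mono (by exact_mod_cast hT)⟩

lemma carleson {n : ℕ} {S : Finset (Set (Rn n))} (h : GoodFam S) (U : Set (Rn n))
    (hU : ∀ Q ∈ S, Q ⊆ U) : ∑ Q ∈ S, volume Q ≤ 2 * volume U := by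
  obtain ⟨E, h1, h2⟩ := h.sparse
  calc ∑ Q ∈ S, volume Q ≤ ∑ Q ∈ S, 2 * volume (E Q) :=
        Finset.sum_le_sum fun Q hQ => (h1 Q hQ).2.2
    _ = 2 * volume (⋃ Q ∈ S, E Q) := by
        rw [← Finset.mul_sum, measure_biUnion_finset h2 fun Q hQ => (h1 Q hQ).2.1]
    _ ≤ 2 * volume U := by
        gcongr
        exact iUnion₂_subset fun Q hQ => (h1 Q hQ).1.trans (hU Q hQ)

lemma weakUnion {n : ℕ} {S : Finset (Set (Rn n))} (h : GoodFam S) (f : Rn n → ℝ≥0∞) (τ : ℝ≥0∞)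
    (hτ : ∀ Q ∈ S, τ * volume Q ≤ ∫⁻ x in Q, f x) :
    τ * volume (⋃ Q ∈ S, Q) ≤ ∫⁻ x in (⋃ Q ∈ S, Q), f x := by
  classical
  set M := S.filter (fun Q => Maximal (· ∈ S) Q) with hM
  have hMS : M ⊆ S := Finset.filter_subset _ _
  have hdis : (M : Set (Set (Rn n))).PairwiseDisjoint id := by
    intro Q hQ R hR hne
    have hQ' := Finset.mem_filter.1 (Finset.mem_coe.1 hQ)
    have hR' := Finset.mem_filter.1 (Finset.mem_coe.1 hR)
    rcases h.lam Q hQ'.1 R hR'.1 with h1 | h1 | h1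
    · exact absurd (hQ'.2.eq_of_le hR'.1 h1) hne
    · exact absurd (hR'.2.eq_of_le hQ'.1 h1).symm hne
    · exact h1
  have hUn : (⋃ Q ∈ S, Q) = ⋃ Q ∈ M, Q := by
    apply subset_antisymm
    · refine iUnion₂_subset fun Q hQ => ?_
      obtain ⟨R, hQR, hR⟩ := S.exists_le_maximal hQ
      exact subset_trans hQR (subset_biUnion_of_mem (u := fun Q => Q)
        (show R ∈ M from Finset.mem_filter.2 ⟨hR.1, hR⟩))
    · exact biUnion_subset_biUnion_left (fun Q hQ => hMS hQ)
  rw [hUn]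
  have e1 : volume (⋃ Q ∈ M, Q) = ∑ Q ∈ M, volume Q :=
    measure_biUnion_finset (f := fun Q => Q) hdis fun Q hQ => h.meas Q (hMS hQ)
  have e2 : (∫⁻ x in (⋃ Q ∈ M, Q), f x) = ∑ Q ∈ M, ∫⁻ x in Q, f x :=
    lintegral_biUnion_finset (t := fun Q => Q) hdis (fun Q hQ => h.meas Q (hMS hQ)) f
  rw [e1, e2, Finset.mul_sum]
  exact Finset.sum_le_sum fun Q hQ => hτ Q (hMS hQ)

lemma weakSum {n : ℕ} {S : Finset (Set (Rn n))} (h : GoodFam S) (f : Rn n → ℝ≥0∞) (τ : ℝ≥0∞)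
    (hτ : ∀ Q ∈ S, τ * volume Q ≤ ∫⁻ x in Q, f x) (U : Set (Rn n)) (hU : ∀ Q ∈ S, Q ⊆ U) :
    τ * ∑ Q ∈ S, volume Q ≤ 2 * ∫⁻ x in U, f x := by
  calc τ * ∑ Q ∈ S, volume Q ≤ τ * (2 * volume (⋃ Q ∈ S, Q)) := by
        gcongr
        exact carleson h _ fun Q hQ => subset_biUnion_of_mem (u := fun Q => Q) hQ
    _ = 2 * (τ * volume (⋃ Q ∈ S, Q)) := by ring
    _ ≤ 2 * ∫⁻ x in (⋃ Q ∈ S, Q), f x := by gcongr; exact weakUnion h f τ hτ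
    _ ≤ _ := by
        gcongr
        exact iUnion₂_subset hU

noncomputable def Kc (r : ℝ) : ℝ≥0∞ := 2 + 2 * 2 ^ r * (1 - 2 ^ (r - 1))⁻¹

lemma Kc_ne_top {r : ℝ} (hr1 : r < 1) : Kc r ≠ ∞ := by
  have h1 : (2 : ℝ≥0∞) ^ (r - 1) < 1 := ENNReal.rpow_lt_one_of_one_lt_of_neg (by norm_num) (by linarith)
  unfold Kc
  refine ENNReal.add_ne_top.2 ⟨by norm_num, ENNReal.mul_ne_top (ENNReal.mul_ne_top (by norm_num) ?_) ?_⟩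
  · exact ENNReal.rpow_ne_top_of_ne_zero (by norm_num) (by norm_num)
  · exact ENNReal.inv_ne_top.2 (tsub_pos_of_lt h1).ne'

lemma layer {r : ℝ} (hr : 0 < r) (u : ℝ≥0∞) (hu : u ≠ ∞) :
    u ^ r ≤ 1 + ∑' k : ℕ, if (2 : ℝ≥0∞) ^ k < u then 2 ^ r * ((2 : ℝ≥0∞) ^ r) ^ k else 0 := by
  rcases le_or_gt u 1 with h | h
  · exact (ENNReal.rpow_le_one h hr.le).trans le_self_add
  · lift u to NNReal using hu
    have h' : (1 : NNReal) < u := by exact_mod_cast h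
    have hex : ∃ m : ℕ, u ≤ 2 ^ m := by
      obtain ⟨m, hm⟩ := pow_unbounded_of_one_lt u (one_lt_two)
      exact ⟨m, hm.le⟩
    classical
    have hs := Nat.find_spec hex
    set m := Nat.find hex with hm
    obtain ⟨k, hk⟩ : ∃ k, m = k + 1 := by
      refine Nat.exists_eq_succ_of_ne_zero fun h0 => ?_
      rw [h0] at hs
      simp at hs
      exact absurd h' (not_lt.2 hs)
    have hk2 : ¬ u ≤ 2 ^ k := Nat.find_min hex (by omega)
    rw [hk] at hs
    have hlt : (2 : ℝ≥0∞) ^ k < (u : ℝ≥0∞) := by exact_mod_cast not_le.1 hk2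
    have hle : (u : ℝ≥0∞) ≤ (2 : ℝ≥0∞) ^ (k + 1) := by exact_mod_cast hs
    refine le_trans ?_ (le_add_left (ENNReal.le_tsum k))
    rw [if_pos hlt, ← pow_succ', ← ENNReal.rpow_natCast, ← ENNReal.rpow_mul, mul_comm,
      ENNReal.rpow_mul, ENNReal.rpow_natCast]
    exact ENNReal.rpow_le_rpow hle hr.le

lemma avg_mul {n : ℕ} (f : Rn n → ℝ≥0∞) (U : Set (Rn n)) (h0 : volume U ≠ 0)
    (h1 : volume U ≠ ∞) : avg f U * volume U = ∫⁻ x in U, f x := by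
  unfold avg mass
  exact ENNReal.div_mul_cancel h0 h1

lemma kolm {n : ℕ} {S : Finset (Set (Rn n))} (h : GoodFam S) (f : Rn n → ℝ≥0∞) {r : ℝ}
    (hr : 0 < r) (U : Set (Rn n)) (hU : ∀ Q ∈ S, Q ⊆ U)
    (hv0 : volume U ≠ 0) (hv1 : volume U ≠ ∞) (hf0 : avg f U ≠ 0) (hf1 : avg f U ≠ ∞)
    (hfQ : ∀ Q ∈ S, avg f Q ≠ ∞) :
    ∑ Q ∈ S, (avg f Q / avg f U) ^ r * volume Q ≤ Kc r * volume U := by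
  classical
  have key : ∀ k : ℕ, ∑ Q ∈ S.filter (fun Q => (2 : ℝ≥0∞) ^ k < avg f Q / avg f U), volume Q
      ≤ 2 * (2 ^ k)⁻¹ * volume U := by
    intro k
    set T := S.filter (fun Q => (2 : ℝ≥0∞) ^ k < avg f Q / avg f U)
    have hT : T ⊆ S := Finset.filter_subset _ _
    have := weakSum (h.mono hT) f (2 ^ k * avg f U) (by
      intro Q hQ
      have h1 := (Finset.mem_filter.1 hQ)
      rw [← avg_mul f Q (h.pos Q h1.1) (h.fin Q h1.1)]
      gcongr
      exact ((ENNReal.le_div_iff_mul_le (Or.inl hf0) (Or.inl hf1)).1 h1.2.le)) U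
      (fun Q hQ => hU Q (hT hQ))
    rw [← avg_mul f U hv0 hv1] at this
    have h2 : avg f U * (2 ^ k * ∑ Q ∈ T, volume Q) ≤ avg f U * (2 * volume U) := by
      calc _ = 2 ^ k * avg f U * ∑ Q ∈ T, volume Q := by ring
        _ ≤ _ := this
        _ = _ := by ring
    have h3 := (ENNReal.mul_le_mul_iff_right hf0 hf1).1 h2
    have h4 : ((2 : ℝ≥0∞) ^ k) ≠ 0 := by positivity
    have h5 : ((2 : ℝ≥0∞) ^ k) ≠ ∞ := ENNReal.pow_ne_top (by norm_num)
    calc ∑ Q ∈ T, volume Q = (2 ^ k)⁻¹ * (2 ^ k * ∑ Q ∈ T, volume Q) := by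
          rw [← mul_assoc, ENNReal.inv_mul_cancel h4 h5, one_mul]
      _ ≤ (2 ^ k)⁻¹ * (2 * volume U) := by gcongr
      _ = _ := by ring
  calc ∑ Q ∈ S, (avg f Q / avg f U) ^ r * volume Q
      ≤ ∑ Q ∈ S, (1 + ∑' k : ℕ, if (2 : ℝ≥0∞) ^ k < avg f Q / avg f U then
          2 ^ r * ((2 : ℝ≥0∞) ^ r) ^ k else 0) * volume Q := by
        gcongr with Q hQ
        exact layer hr _ (ENNReal.div_ne_top (hfQ Q hQ) hf0)
    _ = ∑ Q ∈ S, volume Q + ∑' k : ℕ, ∑ Q ∈ S, (if (2 : ℝ≥0∞) ^ k < avg f Q / avg f U then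
          2 ^ r * ((2 : ℝ≥0∞) ^ r) ^ k else 0) * volume Q := by
        rw [Summable.tsum_finsetSum (fun _ _ => ENNReal.summable), ← Finset.sum_add_distrib]
        refine Finset.sum_congr rfl fun Q _ => ?_
        rw [add_mul, one_mul, ENNReal.tsum_mul_right]
    _ = ∑ Q ∈ S, volume Q + ∑' k : ℕ, 2 ^ r * ((2 : ℝ≥0∞) ^ r) ^ k *
          ∑ Q ∈ S.filter (fun Q => (2 : ℝ≥0∞) ^ k < avg f Q / avg f U), volume Q := by
        congr 1
        refine tsum_congr fun k => ?_
        rw [Finset.mul_sum, Finset.sum_filter]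
        refine Finset.sum_congr rfl fun Q _ => ?_
        split_ifs <;> simp
    _ ≤ 2 * volume U + ∑' k : ℕ, 2 ^ r * ((2 : ℝ≥0∞) ^ r) ^ k * (2 * (2 ^ k)⁻¹ * volume U) := by
        gcongr with k
        · exact carleson h U hU
        · exact key k
    _ = 2 * volume U + ∑' k : ℕ, 2 * 2 ^ r * volume U * ((2 : ℝ≥0∞) ^ (r - 1)) ^ k := by
        congr 1
        refine tsum_congr fun k => ?_
        rw [ENNReal.rpow_sub _ _ (by norm_num) (by norm_num), ENNReal.rpow_one, div_eq_mul_inv,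
          mul_pow, ENNReal.inv_pow]
        ring
    _ = Kc r * volume U := by
        rw [ENNReal.tsum_mul_left, ENNReal.tsum_geometric, Kc]
        ring

lemma bern {s : ℝ} (hs : 1 ≤ s) (l G : ℝ≥0∞) (hl : l ≠ ∞) (hG : G ≠ ∞) :
    (l + G) ^ s ≤ G ^ s + ENNReal.ofReal s * (l * (l + G) ^ (s - 1)) := by
  lift l to NNReal using hl
  lift G to NNReal using hG
  rw [← ENNReal.coe_add, ← ENNReal.coe_rpow_of_nonneg _ (by linarith),
    ← ENNReal.coe_rpow_of_nonneg _ (by linarith), ← ENNReal.coe_rpow_of_nonneg _ (by linarith),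
    ENNReal.ofReal]
  norm_cast
  rw [← NNReal.coe_le_coe]
  push_cast
  rw [Real.coe_toNNReal _ (by linarith)]
  have hl := l.2
  have hG := G.2
  set a : ℝ := (l : ℝ)
  set b : ℝ := (G : ℝ)
  change 0 ≤ a at hl
  change 0 ≤ b at hG
  rcases eq_or_lt_of_le (add_nonneg hl hG) with h0 | h0
  · have ha : a = 0 := by linarith
    have hb : b = 0 := by linarith
    rw [ha, hb]; simp
  · have hb := one_add_mul_self_le_rpow_one_add (s := -a / (a + b)) (by
      rw [le_div_iff₀ h0]; linarith) hs
    have e1 : 1 + -a / (a + b) = b / (a + b) := by field_simp; ring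
    rw [e1, Real.div_rpow hG h0.le] at hb
    have hpos : 0 < (a + b) ^ s := Real.rpow_pos_of_pos h0 s
    rw [le_div_iff₀ hpos] at hb
    have e2 : (a + b) ^ s = (a + b) * (a + b) ^ (s - 1) := by
      rw [← Real.rpow_one_add' h0.le (by linarith)]; congr 1; ring
    have e3 : (1 + s * (-a / (a + b))) * (a + b) ^ s
        = (a + b) ^ s - s * (a * (a + b) ^ (s - 1)) := by
      rw [e2]; field_simp; ring
    rw [e3] at hb
    linarith

lemma chain {α : Type*} [DecidableEq (Set α)] {s : ℝ} (hs : 1 ≤ s) (lam : Set α → ℝ≥0∞) :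
    ∀ (m : ℕ) (T : Finset (Set α)), T.card = m → (∀ Q ∈ T, lam Q ≠ ∞) →
    (∀ Q ∈ T, ∀ R ∈ T, Q ⊆ R ∨ R ⊆ Q) → ∀ L : Set α → ℝ≥0∞,
    (∀ Q ∈ T, ∀ T' ⊆ T, (∀ R ∈ T', R ⊆ Q) → ∑ R ∈ T', lam R ≤ L Q) →
    (∑ Q ∈ T, lam Q) ^ s ≤ ENNReal.ofReal s * ∑ Q ∈ T, lam Q * L Q ^ (s - 1) := by
  intro m
  induction m with
  | zero =>
    intro T hT _ _ _ _
    rw [Finset.card_eq_zero.1 hT]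
    simp [ENNReal.zero_rpow_of_pos (show 0 < s by linarith)]
  | succ m ih =>
    intro T hT hfin htot L hL
    have hne : T.Nonempty := Finset.card_pos.1 (by omega)
    obtain ⟨M, hM⟩ := T.exists_maximal hne
    have hMT : M ∈ T := hM.1
    have hall : ∀ R ∈ T, R ⊆ M := fun R hR => by
      rcases htot R hR M hMT with h | h
      · exact h
      · exact hM.2 hR h
    have hsub : T.erase M ⊆ T := Finset.erase_subset _ _
    have ih' := ih (T.erase M) (by rw [Finset.card_erase_of_mem hMT]; omega)
      (fun Q hQ => hfin Q (hsub hQ)) (fun Q hQ R hR => htot Q (hsub hQ) R (hsub hR)) L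
      (fun Q hQ T' hT' h => hL Q (hsub hQ) T' (hT'.trans hsub) h)
    have e : ∑ Q ∈ T, lam Q = lam M + ∑ Q ∈ T.erase M, lam Q :=
      (Finset.add_sum_erase T lam hMT).symm
    have e' : ∑ Q ∈ T, lam Q * L Q ^ (s - 1) =
        lam M * L M ^ (s - 1) + ∑ Q ∈ T.erase M, lam Q * L Q ^ (s - 1) :=
      (Finset.add_sum_erase T (fun Q => lam Q * L Q ^ (s - 1)) hMT).symm
    have hLM := hL M hMT T subset_rfl hall
    rw [e] at hLM
    rw [e, e', mul_add, add_comm (ENNReal.ofReal s * _)]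
    refine (bern hs _ _ (hfin M hMT)
      (ENNReal.sum_ne_top.2 fun Q hQ => hfin Q (hsub hQ))).trans ?_
    gcongr

noncomputable def Fs {n : ℕ} (S : Finset (Set (Rn n))) (lam : Set (Rn n) → ℝ≥0∞) (x : Rn n) : ℝ≥0∞ :=
  ∑ Q ∈ S, Q.indicator (fun _ => lam Q) x

lemma Fs_meas {n : ℕ} {S : Finset (Set (Rn n))} (h : ∀ Q ∈ S, MeasurableSet Q)
    (lam : Set (Rn n) → ℝ≥0∞) : Measurable (Fs S lam) := by
  unfold Fs
  exact Finset.measurable_fun_sum _ fun Q hQ => measurable_const.indicator (h Q hQ)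

open Classical in
lemma Fs_chain {n : ℕ} {S : Finset (Set (Rn n))} (h : GoodFam S) (lam : Set (Rn n) → ℝ≥0∞)
    (hl : ∀ Q ∈ S, lam Q ≠ ∞) {s : ℝ} (hs : 1 ≤ s) (x : Rn n) :
    Fs S lam x ^ s ≤ ENNReal.ofReal s *
      ∑ Q ∈ S, lam Q * Fs (S.filter (fun R => R ⊆ Q)) lam x ^ (s - 1) := by
  set T := S.filter (fun Q => x ∈ Q) with hT
  have hTS : T ⊆ S := Finset.filter_subset _ _
  have e : Fs S lam x = ∑ Q ∈ T, lam Q := by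
    rw [hT, Finset.sum_filter]
    exact Finset.sum_congr rfl fun Q _ => by simp [Set.indicator_apply]
  rw [e]
  refine (chain hs lam _ T rfl (fun Q hQ => hl Q (hTS hQ)) ?_
    (fun Q => Fs (S.filter (fun R => R ⊆ Q)) lam x) ?_).trans ?_
  · intro Q hQ R hR
    have hQ' := Finset.mem_filter.1 hQ
    have hR' := Finset.mem_filter.1 hR
    rcases h.lam Q hQ'.1 R hR'.1 with h1 | h1 | h1
    · exact Or.inl h1
    · exact Or.inr h1
    · exact absurd hR'.2 (Set.disjoint_left.1 h1 hQ'.2)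
  · intro Q hQ T' hT' hsub
    calc ∑ R ∈ T', lam R = ∑ R ∈ T', R.indicator (fun _ => lam R) x :=
          Finset.sum_congr rfl fun R hR => by
            rw [Set.indicator_of_mem (Finset.mem_filter.1 (hT' hR)).2]
      _ ≤ Fs (S.filter (fun R => R ⊆ Q)) lam x :=
          Finset.sum_le_sum_of_subset fun R hR =>
            Finset.mem_filter.2 ⟨hTS (hT' hR), hsub R hR⟩
  · gcongr

open Classical in
lemma Jstep {n : ℕ} {S : Finset (Set (Rn n))} (h : GoodFam S) (lam : Set (Rn n) → ℝ≥0∞)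
    (hl : ∀ Q ∈ S, lam Q ≠ ∞) {s : ℝ} (hs : 1 ≤ s) (v : Rn n → ℝ≥0∞) (hv : Measurable v) :
    ∫⁻ x, Fs S lam x ^ s * v x ≤ ENNReal.ofReal s *
      ∑ Q ∈ S, lam Q * ∫⁻ x, Fs (S.filter (fun R => R ⊆ Q)) lam x ^ (s - 1) * v x := by
  have hm : ∀ Q : Set (Rn n), Measurable
      (fun x => Fs (S.filter (fun R => R ⊆ Q)) lam x ^ (s - 1) * v x) := fun Q =>
    ((Fs_meas (fun R hR => h.meas R (Finset.mem_filter.1 hR).1) lam).pow_const _).mul hv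
  calc ∫⁻ x, Fs S lam x ^ s * v x
      ≤ ∫⁻ x, ENNReal.ofReal s *
      ∑ Q ∈ S, lam Q * (Fs (S.filter (fun R => R ⊆ Q)) lam x ^ (s - 1) * v x) := by
        refine lintegral_mono fun x => ?_
        refine (mul_le_mul_left (Fs_chain h lam hl hs x) (v x)).trans (le_of_eq ?_)
        rw [mul_assoc, Finset.sum_mul]
        simp only [mul_assoc]
    _ = _ := by
        rw [lintegral_const_mul' _ _ ENNReal.ofReal_ne_top, lintegral_finsetSum]
        · congr 1
          refine Finset.sum_congr rfl fun Q hQ => ?_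
          rw [lintegral_const_mul' _ _ (hl Q hQ)]
        · exact fun Q _ => (hm Q).const_mul _

lemma rpow_sum_le_sum {ι : Type*} {s : ℝ} (hs0 : 0 < s) (hs : s ≤ 1) (S : Finset ι)
    (g : ι → ℝ≥0∞) : (∑ i ∈ S, g i) ^ s ≤ ∑ i ∈ S, g i ^ s := by
  classical
  induction S using Finset.induction_on with
  | empty => simp [hs0]
  | insert a S ha ih =>
    rw [Finset.sum_insert ha, Finset.sum_insert ha]
    exact (ENNReal.rpow_add_le_add_rpow _ _ hs0.le hs).trans (by gcongr)

lemma mul_rpow_sub_one {s : ℝ} (hs : 1 ≤ s) (x : ℝ≥0∞) : x * x ^ (s - 1) = x ^ s := by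
  have h := ENNReal.rpow_add_of_nonneg (x := x) 1 (s - 1) zero_le_one (by linarith)
  rw [ENNReal.rpow_one, add_sub_cancel] at h
  exact h.symm

lemma Fs_small {n : ℕ} {S : Finset (Set (Rn n))} (h : GoodFam S) (lam : Set (Rn n) → ℝ≥0∞)
    {s : ℝ} (hs0 : 0 < s) (hs : s ≤ 1) (v : Rn n → ℝ≥0∞) (hv : Measurable v) :
    ∫⁻ x, Fs S lam x ^ s * v x ≤ ∑ Q ∈ S, lam Q ^ s * ∫⁻ x in Q, v x := by
  calc ∫⁻ x, Fs S lam x ^ s * v x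
      ≤ ∫⁻ x, ∑ Q ∈ S, Q.indicator (fun x => lam Q ^ s * v x) x := by
        refine lintegral_mono fun x => ?_
        calc Fs S lam x ^ s * v x ≤ (∑ Q ∈ S, (Q.indicator (fun _ => lam Q) x) ^ s) * v x := by
              gcongr
              unfold Fs
              exact rpow_sum_le_sum hs0 hs S _
          _ = _ := by
              rw [Finset.sum_mul]
              refine Finset.sum_congr rfl fun Q _ => ?_
              by_cases hx : x ∈ Q <;> simp [hx, hs0]
    _ = _ := by
        rw [lintegral_finsetSum]
        · refine Finset.sum_congr rfl fun Q hQ => ?_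
          rw [lintegral_indicator (h.meas Q hQ), lintegral_const_mul _ hv]
        · exact fun Q hQ => (hv.const_mul _).indicator (h.meas Q hQ)

/-- exponential coordinates -/
noncomputable def Ex (x : ℝ) : ℝ≥0∞ := ENNReal.ofReal (Real.exp x)

lemma Ex_mul (x y : ℝ) : Ex x * Ex y = Ex (x + y) := by
  unfold Ex; rw [Real.exp_add, ENNReal.ofReal_mul (Real.exp_pos x).le]

lemma Ex_rpow (x r : ℝ) : Ex x ^ r = Ex (x * r) := by
  unfold Ex; rw [Real.exp_mul, ENNReal.ofReal_rpow_of_pos (Real.exp_pos x)]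

lemma Ex_div (x y : ℝ) : Ex x / Ex y = Ex (x - y) := by
  unfold Ex; rw [Real.exp_sub, ENNReal.ofReal_div_of_pos (Real.exp_pos y)]

lemma exists_Ex {a : ℝ≥0∞} (h0 : a ≠ 0) (h1 : a ≠ ∞) : ∃ x, a = Ex x :=
  ⟨Real.log a.toReal, by
    unfold Ex
    rw [Real.exp_log (ENNReal.toReal_pos h0 h1), ENNReal.ofReal_toReal h1]⟩

noncomputable def Wt (A : ℝ≥0∞) (t α β s : ℝ) (a b v : ℝ≥0∞) : ℝ≥0∞ :=
  (a * b) ^ s * (A / (v * a ^ α * b ^ β)) ^ (t * s) * v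

lemma Wt_ratio {A : ℝ≥0∞} {t α β s : ℝ} {a b v a' b' v' : ℝ≥0∞}
    (hA0 : A ≠ 0) (hA1 : A ≠ ∞) (ha0 : a ≠ 0) (ha1 : a ≠ ∞) (hb0 : b ≠ 0) (hb1 : b ≠ ∞)
    (hv0 : v ≠ 0) (hv1 : v ≠ ∞) (ha0' : a' ≠ 0) (ha1' : a' ≠ ∞) (hb0' : b' ≠ 0) (hb1' : b' ≠ ∞)
    (hv0' : v' ≠ 0) (hv1' : v' ≠ ∞) :
    Wt A t α β s a' b' v' = Wt A t α β s a b v *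
      ((v' / v) ^ (1 - t * s) * (a' / a) ^ (s - t * s * α) * (b' / b) ^ (s - t * s * β)) := by
  obtain ⟨A, rfl⟩ := exists_Ex hA0 hA1
  obtain ⟨a, rfl⟩ := exists_Ex ha0 ha1
  obtain ⟨b, rfl⟩ := exists_Ex hb0 hb1
  obtain ⟨v, rfl⟩ := exists_Ex hv0 hv1
  obtain ⟨a', rfl⟩ := exists_Ex ha0' ha1'
  obtain ⟨b', rfl⟩ := exists_Ex hb0' hb1'
  obtain ⟨v', rfl⟩ := exists_Ex hv0' hv1'
  simp only [Wt, Ex_mul, Ex_rpow, Ex_div]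
  congr 1
  ring

lemma prod3 {x y z : ℝ} (hx : 0 < x) (hy : 0 < y) (hz : 0 < z) (a b c : ℝ≥0∞) :
    a ^ x * b ^ y * c ^ z ≤ a ^ (x + y + z) + b ^ (x + y + z) + c ^ (x + y + z) := by
  set m := max a (max b c) with hm
  have h1 : a ^ x * b ^ y * c ^ z ≤ m ^ (x + y + z) := by
    rw [ENNReal.rpow_add_of_nonneg _ _ (by linarith) hz.le,
      ENNReal.rpow_add_of_nonneg _ _ hx.le hy.le]
    gcongr
    · exact le_max_left _ _
    · exact (le_max_left _ _).trans (le_max_right _ _)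
    · exact (le_max_right _ _).trans (le_max_right _ _)
  refine h1.trans ?_
  rcases max_choice a (max b c) with h | h
  · rw [hm, h, add_assoc (a ^ _)]; exact (le_self_add : a ^ (x + y + z) ≤ a ^ (x + y + z) + (b ^ (x + y + z) + c ^ (x + y + z)))
  · rcases max_choice b c with h' | h'
    · rw [hm, h, h']; exact (le_add_left le_rfl : b ^ (x + y + z) ≤ a ^ (x + y + z) + b ^ (x + y + z)).trans le_self_add
    · rw [hm, h, h']; exact (le_add_left le_rfl : c ^ (x + y + z) ≤ (a ^ (x + y + z) + b ^ (x + y + z)) + c ^ (x + y + z))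

structure Adm {n : ℕ} (A : ℝ≥0∞) (α β : ℝ) (f1 f2 v : Rn n → ℝ≥0∞) (S : Finset (Set (Rn n))) :
    Prop where
  a0 : ∀ Q ∈ S, avg f1 Q ≠ 0
  a1 : ∀ Q ∈ S, avg f1 Q ≠ ∞
  b0 : ∀ Q ∈ S, avg f2 Q ≠ 0
  b1 : ∀ Q ∈ S, avg f2 Q ≠ ∞
  v0 : ∀ Q ∈ S, avg v Q ≠ 0
  v1 : ∀ Q ∈ S, avg v Q ≠ ∞
  X : ∀ Q ∈ S, avg v Q * avg f1 Q ^ α * avg f2 Q ^ β ≤ A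
  A1 : A ≠ ∞

lemma Adm.mono {n : ℕ} {A : ℝ≥0∞} {α β : ℝ} {f1 f2 v : Rn n → ℝ≥0∞} {S T : Finset (Set (Rn n))}
    (h : Adm A α β f1 f2 v S) (hT : T ⊆ S) : Adm A α β f1 f2 v T :=
  ⟨fun Q hQ => h.a0 Q (hT hQ), fun Q hQ => h.a1 Q (hT hQ), fun Q hQ => h.b0 Q (hT hQ),
   fun Q hQ => h.b1 Q (hT hQ), fun Q hQ => h.v0 Q (hT hQ), fun Q hQ => h.v1 Q (hT hQ),
   fun Q hQ => h.X Q (hT hQ), h.A1⟩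

lemma Adm.X0 {n : ℕ} {A : ℝ≥0∞} {α β : ℝ} {f1 f2 v : Rn n → ℝ≥0∞} {S : Finset (Set (Rn n))}
    (h : Adm A α β f1 f2 v S) {Q : Set (Rn n)} (hQ : Q ∈ S) :
    avg v Q * avg f1 Q ^ α * avg f2 Q ^ β ≠ 0 :=
  mul_ne_zero (mul_ne_zero (h.v0 Q hQ)
    (ENNReal.rpow_pos (pos_iff_ne_zero.2 (h.a0 Q hQ)) (h.a1 Q hQ)).ne')
    (ENNReal.rpow_pos (pos_iff_ne_zero.2 (h.b0 Q hQ)) (h.b1 Q hQ)).ne'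

lemma Adm.A0 {n : ℕ} {A : ℝ≥0∞} {α β : ℝ} {f1 f2 v : Rn n → ℝ≥0∞} {S : Finset (Set (Rn n))}
    (h : Adm A α β f1 f2 v S) {Q : Set (Rn n)} (hQ : Q ∈ S) : A ≠ 0 := by
  rintro rfl
  exact h.X0 hQ (le_antisymm (h.X Q hQ) zero_le)

lemma Adm.one_le {n : ℕ} {A : ℝ≥0∞} {α β : ℝ} {f1 f2 v : Rn n → ℝ≥0∞} {S : Finset (Set (Rn n))}
    (h : Adm A α β f1 f2 v S) {Q : Set (Rn n)} (hQ : Q ∈ S) :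
    1 ≤ A / (avg v Q * avg f1 Q ^ α * avg f2 Q ^ β) := by
  rw [ENNReal.le_div_iff_mul_le (Or.inl (h.X0 hQ)) (Or.inl (ne_top_of_le_ne_top h.A1 (h.X Q hQ))),
    one_mul]
  exact h.X Q hQ

lemma sumWt {n : ℕ} {A : ℝ≥0∞} {α β t s : ℝ} {f1 f2 v : Rn n → ℝ≥0∞} {S : Finset (Set (Rn n))}
    (h : Adm A α β f1 f2 v S) (hS : GoodFam S) (hs : 0 < s) (ht : t * s < 1) (hα : t * α < 1)
    (hβ : t * β < 1) {r : ℝ} (hr : r = (1 - t * s) + (s - t * s * α) + (s - t * s * β))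
    (U : Set (Rn n)) (hUS : U ∈ S) (hU : ∀ Q ∈ S, Q ⊆ U) :
    ∑ Q ∈ S, Wt A t α β s (avg f1 Q) (avg f2 Q) (avg v Q) * volume Q ≤
      3 * Kc r * (Wt A t α β s (avg f1 U) (avg f2 U) (avg v U) * volume U) := by
  have hx : 0 < 1 - t * s := by linarith
  have hy : 0 < s - t * s * α := by nlinarith
  have hz : 0 < s - t * s * β := by nlinarith
  have hr0 : 0 < r := by linarith
  set W := Wt A t α β s (avg f1 U) (avg f2 U) (avg v U)
  calc ∑ Q ∈ S, Wt A t α β s (avg f1 Q) (avg f2 Q) (avg v Q) * volume Q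
      ≤ ∑ Q ∈ S, W * (((avg v Q / avg v U) ^ r * volume Q + (avg f1 Q / avg f1 U) ^ r * volume Q)
        + (avg f2 Q / avg f2 U) ^ r * volume Q) := by
        refine Finset.sum_le_sum fun Q hQ => ?_
        rw [Wt_ratio (h.A0 hUS) h.A1 (h.a0 U hUS) (h.a1 U hUS) (h.b0 U hUS) (h.b1 U hUS)
          (h.v0 U hUS) (h.v1 U hUS) (h.a0 Q hQ) (h.a1 Q hQ) (h.b0 Q hQ) (h.b1 Q hQ)
          (h.v0 Q hQ) (h.v1 Q hQ), mul_assoc, ← add_mul, ← add_mul, hr]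
        gcongr
        exact prod3 hx hy hz _ _ _
    _ = W * ((∑ Q ∈ S, (avg v Q / avg v U) ^ r * volume Q
        + ∑ Q ∈ S, (avg f1 Q / avg f1 U) ^ r * volume Q)
        + ∑ Q ∈ S, (avg f2 Q / avg f2 U) ^ r * volume Q) := by
        rw [← Finset.mul_sum, Finset.sum_add_distrib, Finset.sum_add_distrib]
    _ ≤ W * ((Kc r * volume U + Kc r * volume U) + Kc r * volume U) := by
        gcongr
        · exact kolm hS v hr0 U hU (hS.pos U hUS) (hS.fin U hUS) (h.v0 U hUS) (h.v1 U hUS) h.v1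
        · exact kolm hS f1 hr0 U hU (hS.pos U hUS) (hS.fin U hUS) (h.a0 U hUS) (h.a1 U hUS) h.a1
        · exact kolm hS f2 hr0 U hU (hS.pos U hUS) (hS.fin U hUS) (h.b0 U hUS) (h.b1 U hUS) h.b1
    _ = _ := by ring

lemma mainInd {n : ℕ} {α β t q : ℝ} (ht0 : 0 < t) (ht : t * q < 1) (hα : t * α < 1)
    (hβ : t * β < 1) (hsum : 2 < t * (1 + α + β)) (N : ℕ) :
    ∀ s : ℝ, 0 < s → s ≤ N → s ≤ q → ∃ C : ℝ≥0∞, C ≠ ∞ ∧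
      ∀ (A : ℝ≥0∞) (f1 f2 v : Rn n → ℝ≥0∞) (S : Finset (Set (Rn n))), Measurable v →
        Adm A α β f1 f2 v S → GoodFam S → ∀ U ∈ S, (∀ Q ∈ S, Q ⊆ U) →
        ∫⁻ x, Fs S (fun Q => avg f1 Q * avg f2 Q) x ^ s * v x ≤
          C * (Wt A t α β s (avg f1 U) (avg f2 U) (avg v U) * volume U) := by
  classical
  induction N with
  | zero => intro s h0 h1; norm_num at h1; linarith
  | succ N ih =>
    intro s hs hsN hsq
    have hts : t * s < 1 := lt_of_le_of_lt (mul_le_mul_of_nonneg_left hsq ht0.le) ht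
    set r := (1 - t * s) + (s - t * s * α) + (s - t * s * β) with hr
    have hr1 : r < 1 := by rw [hr]; nlinarith
    have hK : 3 * Kc r ≠ ∞ := ENNReal.mul_ne_top (by norm_num) (Kc_ne_top hr1)
    rcases le_or_gt s 1 with hs1 | hs1
    · refine ⟨3 * Kc r, hK, ?_⟩
      intro A f1 f2 v S hv hA hS U hUS hU
      refine le_trans ?_ (sumWt hA hS hs hts hα hβ hr U hUS hU)
      refine (Fs_small hS _ hs hs1 v hv).trans (Finset.sum_le_sum fun Q hQ => ?_)
      rw [← avg_mul v Q (hS.pos Q hQ) (hS.fin Q hQ), ← mul_assoc]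
      unfold Wt
      gcongr
      refine le_mul_of_one_le_right zero_le ?_
      exact ENNReal.one_le_rpow (hA.one_le hQ) (by positivity)
    · obtain ⟨C, hC, hI⟩ := ih (s - 1) (by linarith) (by push_cast at hsN; linarith) (by linarith)
      refine ⟨ENNReal.ofReal s * C * (3 * Kc r),
        ENNReal.mul_ne_top (ENNReal.mul_ne_top ENNReal.ofReal_ne_top hC) hK, ?_⟩
      intro A f1 f2 v S hv hA hS U hUS hU
      rw [mul_assoc]
      refine le_trans ?_ (mul_le_mul_right (sumWt hA hS hs hts hα hβ hr U hUS hU) _)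
      refine (Jstep hS _ (fun Q hQ => ENNReal.mul_ne_top (hA.a1 Q hQ) (hA.b1 Q hQ))
        hs1.le v hv).trans ?_
      rw [mul_assoc, Finset.mul_sum (s := S) (a := C)]
      refine mul_le_mul_right (Finset.sum_le_sum fun Q hQ => ?_) _
      have hsub : S.filter (fun R => R ⊆ Q) ⊆ S := Finset.filter_subset _ _
      refine (mul_le_mul_right (hI A f1 f2 v _ hv (hA.mono hsub) (hS.mono hsub) Q
        (Finset.mem_filter.2 ⟨hQ, subset_rfl⟩) (fun R hR => (Finset.mem_filter.1 hR).2)) _).trans ?_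
      have e : avg f1 Q * avg f2 Q * (C * (Wt A t α β (s - 1) (avg f1 Q) (avg f2 Q) (avg v Q)
          * volume Q)) = C * ((avg f1 Q * avg f2 Q) * Wt A t α β (s - 1) (avg f1 Q) (avg f2 Q) (avg v Q)
          * volume Q) := by ring
      rw [e]
      gcongr
      unfold Wt
      rw [← mul_assoc, ← mul_assoc, mul_rpow_sub_one hs1.le]
      gcongr
      · exact hA.one_le hQ
      · linarith

lemma finiteMain {n : ℕ} {α β t p : ℝ} (hp : 1 < p) (ht0 : 0 < t) (ht : t * (p - 1) < 1)
    (hα : t * α < 1) (hβ : t * β < 1) (hsum : 2 < t * (1 + α + β)) : ∃ C : ℝ≥0∞, C ≠ ∞ ∧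
      ∀ (A : ℝ≥0∞) (f1 f2 v : Rn n → ℝ≥0∞) (S : Finset (Set (Rn n))), Measurable v →
        Adm A α β f1 f2 v S → GoodFam S →
        ∫⁻ x, Fs S (fun Q => avg f1 Q * avg f2 Q) x ^ p * v x ≤
          C * A * ∑ Q ∈ S, avg f1 Q ^ (p - α) * avg f2 Q ^ (p - β) * volume Q := by
  classical
  obtain ⟨N, hN⟩ := exists_nat_ge (p - 1)
  obtain ⟨C, hC, hI⟩ := mainInd (n := n) ht0 ht hα hβ hsum N (p - 1) (by linarith) hN le_rfl
  refine ⟨ENNReal.ofReal p * C, ENNReal.mul_ne_top ENNReal.ofReal_ne_top hC, ?_⟩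
  intro A f1 f2 v S hv hA hS
  refine (Jstep hS _ (fun Q hQ => ENNReal.mul_ne_top (hA.a1 Q hQ) (hA.b1 Q hQ))
        hp.le v hv).trans ?_
  rw [mul_assoc, mul_assoc, ← mul_assoc C, Finset.mul_sum (s := S) (a := C * A)]
  refine mul_le_mul_right (Finset.sum_le_sum fun Q hQ => ?_) _
  have hsub : S.filter (fun R => R ⊆ Q) ⊆ S := Finset.filter_subset _ _
  refine (mul_le_mul_right (hI A f1 f2 v _ hv (hA.mono hsub) (hS.mono hsub) Q
        (Finset.mem_filter.2 ⟨hQ, subset_rfl⟩) (fun R hR => (Finset.mem_filter.1 hR).2)) _).trans ?_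
  have h1 : Wt A t α β (p - 1) (avg f1 Q) (avg f2 Q) (avg v Q) ≤
      (avg f1 Q * avg f2 Q) ^ (p - 1) * (A / (avg v Q * avg f1 Q ^ α * avg f2 Q ^ β)) ^ (1 : ℝ)
        * avg v Q := by
    unfold Wt
    gcongr
    exact hA.one_le hQ
  have h2 : avg f1 Q * avg f2 Q * ((avg f1 Q * avg f2 Q) ^ (p - 1) *
      (A / (avg v Q * avg f1 Q ^ α * avg f2 Q ^ β)) ^ (1 : ℝ) * avg v Q) =
      A * (avg f1 Q ^ (p - α) * avg f2 Q ^ (p - β)) := by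
    obtain ⟨A', hA'⟩ := exists_Ex (hA.A0 hQ) hA.A1
    obtain ⟨a, ha⟩ := exists_Ex (hA.a0 Q hQ) (hA.a1 Q hQ)
    obtain ⟨b, hb⟩ := exists_Ex (hA.b0 Q hQ) (hA.b1 Q hQ)
    obtain ⟨c, hc⟩ := exists_Ex (hA.v0 Q hQ) (hA.v1 Q hQ)
    rw [hA', ha, hb, hc]
    simp only [Ex_mul, Ex_rpow, Ex_div]
    congr 1
    ring
  calc avg f1 Q * avg f2 Q * (C * (Wt A t α β (p - 1) (avg f1 Q) (avg f2 Q) (avg v Q) * volume Q))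
      ≤ avg f1 Q * avg f2 Q * (C * (((avg f1 Q * avg f2 Q) ^ (p - 1) *
      (A / (avg v Q * avg f1 Q ^ α * avg f2 Q ^ β)) ^ (1 : ℝ) * avg v Q) * volume Q)) := by
        gcongr
    _ = C * (avg f1 Q * avg f2 Q * ((avg f1 Q * avg f2 Q) ^ (p - 1) *
      (A / (avg v Q * avg f1 Q ^ α * avg f2 Q ^ β)) ^ (1 : ℝ) * avg v Q)) * volume Q := by ring
    _ = _ := by rw [h2]; ring

lemma cube_facts {n : ℕ} {Q : Set (Rn n)} (h : IsCube Q) :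
    MeasurableSet Q ∧ volume Q ≠ 0 ∧ volume Q ≠ ∞ := by
  obtain ⟨l, hl, c, rfl⟩ := h
  have e : {x : Rn n | ∀ i, c i ≤ x i ∧ x i < c i + l} =
      Set.pi univ (fun i => Ico (c i) (c i + l)) := by
    ext x; simp [Set.mem_pi]
  rw [e]
  refine ⟨MeasurableSet.univ_pi fun i => measurableSet_Ico, ?_, ?_⟩
  · rw [Real.volume_pi_Ico]; simp [hl]
  · rw [Real.volume_pi_Ico]
    exact ENNReal.prod_ne_top fun i _ => ENNReal.ofReal_ne_top

def bigB (n : ℕ) (k : ℕ) : Set (Rn n) :=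
  {x | ∀ i, (fun _ => -((k : ℝ) + 1)) i ≤ x i ∧ x i < (fun _ => -((k : ℝ) + 1)) i + 2 * ((k : ℝ) + 1)}

lemma bigB_cube (n k : ℕ) : IsCube (bigB n k) :=
  ⟨2 * ((k : ℝ) + 1), by positivity, _, rfl⟩

lemma bigB_mem {n k : ℕ} {x : Rn n} : x ∈ bigB n k ↔ ∀ i, -((k : ℝ) + 1) ≤ x i ∧ x i < (k : ℝ) + 1 := by
  unfold bigB
  simp only [mem_setOf_eq]
  refine forall_congr' fun i => and_congr_right fun _ => ?_
  rw [show -((k : ℝ) + 1) + 2 * ((k : ℝ) + 1) = k + 1 by ring]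

lemma bigB_mono {n k l : ℕ} (h : k ≤ l) : bigB n k ⊆ bigB n l := by
  intro x hx
  rw [bigB_mem] at *
  have : (k : ℝ) ≤ l := by exact_mod_cast h
  exact fun i => ⟨by linarith [(hx i).1], by linarith [(hx i).2]⟩

lemma cube_subset_bigB {n : ℕ} {Q : Set (Rn n)} (h : IsCube Q) : ∃ k, Q ⊆ bigB n k := by
  obtain ⟨l, hl, c, rfl⟩ := h
  obtain ⟨k, hk⟩ := exists_nat_ge (∑ i, |c i| + l)
  refine ⟨k, fun x hx => bigB_mem.2 fun i => ?_⟩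
  have h1 : |c i| ≤ ∑ i, |c i| :=
    Finset.single_le_sum (f := fun i => |c i|) (fun i _ => abs_nonneg _) (Finset.mem_univ i)
  have h2 := abs_le.1 (le_refl |c i|)
  have h3 := hx i
  constructor <;> linarith [h3.1, h3.2, h2.1, h2.2]

lemma exists_big {n : ℕ} (v : Rn n → ℝ≥0∞) (hv : ∫⁻ x, v x ≠ 0) {Q : Set (Rn n)} (hQ : IsCube Q) :
    ∃ R, IsCube R ∧ Q ⊆ R ∧ mass v R ≠ 0 := by
  have : ∃ k, mass v (bigB n k) ≠ 0 := by
    by_contra! hcon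
    apply hv
    have hU : (⋃ k, bigB n k) = univ := by
      refine eq_univ_of_forall fun x => ?_
      obtain ⟨k, hk⟩ := exists_nat_ge (∑ i, |x i|)
      refine mem_iUnion.2 ⟨k, bigB_mem.2 fun i => ?_⟩
      have h1 : |x i| ≤ ∑ i, |x i| :=
        Finset.single_le_sum (f := fun i => |x i|) (fun i _ => abs_nonneg _) (Finset.mem_univ i)
      have h2 := abs_le.1 (le_refl |x i|)
      constructor <;> linarith [h2.1, h2.2]
    have h := lintegral_iUnion_le (μ := volume) (bigB n) v
    rw [hU, setLIntegral_univ] at h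
    have h0 : ∑' k, ∫⁻ x in bigB n k, v x = 0 := ENNReal.tsum_eq_zero.2 hcon
    rw [h0] at h
    exact le_antisymm h zero_le
  obtain ⟨k, hk⟩ := this
  obtain ⟨l, hl⟩ := cube_subset_bigB hQ
  refine ⟨bigB n (max k l), bigB_cube _ _, hl.trans (bigB_mono (le_max_right _ _)), fun h0 => hk ?_⟩
  exact le_antisymm (h0 ▸ lintegral_mono_set (bigB_mono (le_max_left _ _))) zero_le

lemma conj_exp {q : ℝ} (hq : 1 < q) : 1 - conj q < 0 := by
  unfold conj
  have : 1 < q / (q - 1) := by rw [lt_div_iff₀ (by linarith)]; linarith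
  linarith

lemma dual_mass_ne_zero {n : ℕ} {q : ℝ} (hq : 1 < q) {w : Rn n → ℝ≥0∞} (hw : IsWeight w)
    {Q : Set (Rn n)} (hQ : IsCube Q) : mass (dualW q w) Q ≠ 0 := by
  intro h0
  have hm : Measurable (dualW q w) := hw.1.pow_const _
  have h1 := (lintegral_eq_zero_iff hm).1 h0
  have h2 := ae_lt_top hw.1 (hw.2 Q hQ)
  have h3 : ∀ᵐ x ∂(volume.restrict Q), False := by
    filter_upwards [h1, h2] with x hx1 hx2
    rcases ENNReal.rpow_eq_zero_iff.1 hx1 with h | h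
    · linarith [conj_exp hq, h.2]
    · exact hx2.ne h.1
  have h4 : volume.restrict Q = 0 := by
    rw [← ae_eq_bot]; exact Filter.eventually_false_iff_eq_bot.1 h3
  exact (cube_facts hQ).2.1 (Measure.restrict_eq_zero.1 h4)

lemma dual_ae_pos {n : ℕ} {q : ℝ} (hq : 1 < q) {w : Rn n → ℝ≥0∞} (hw : IsWeight w)
    {Q : Set (Rn n)} (hfin : mass (dualW q w) Q ≠ ∞) : ∀ᵐ x ∂(volume.restrict Q), w x ≠ 0 := by
  have hm : Measurable (dualW q w) := hw.1.pow_const _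
  filter_upwards [ae_lt_top hm hfin] with x hx h0
  rw [dualW, h0, ENNReal.zero_rpow_of_neg (conj_exp hq)] at hx
  exact lt_irrefl _ hx

lemma avg_ne_zero {n : ℕ} {f : Rn n → ℝ≥0∞} {Q : Set (Rn n)} (hQ : IsCube Q) (h : mass f Q ≠ 0) :
    avg f Q ≠ 0 := (ENNReal.div_pos h (cube_facts hQ).2.2).ne'

lemma mass_ne_top {n : ℕ} {f : Rn n → ℝ≥0∞} {Q : Set (Rn n)} (hQ : IsCube Q) (h : avg f Q ≠ ∞) :
    mass f Q ≠ ∞ := by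
  unfold mass
  rw [← avg_mul f Q (cube_facts hQ).2.1 (cube_facts hQ).2.2]
  exact ENNReal.mul_ne_top h (cube_facts hQ).2.2

lemma rpow_ne_zero_of {a : ℝ≥0∞} (h : a ≠ 0) {r : ℝ} (hr : 0 < r) : a ^ r ≠ 0 := by
  simp [ENNReal.rpow_eq_zero_iff, h, hr.le, not_lt.2 hr.le]

lemma cube_adm {n : ℕ} {p p1 p2 : ℝ} (hp0 : 0 < p) (hp1 : 1 < p1) (hp2 : 1 < p2)
    (hα : 0 < p / conj p1) (hβ : 0 < p / conj p2)
    {w1 w2 : Rn n → ℝ≥0∞} (hw1 : IsWeight w1) (hw2 : IsWeight w2)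
    (hA : APconst p p1 p2 w1 w2 ≠ ∞) (hv : ∫⁻ x, vweight p p1 p2 w1 w2 x ≠ 0)
    (S : Finset (Set (Rn n))) (hS : ∀ Q ∈ S, IsCube Q) :
    Adm (APconst p p1 p2 w1 w2) (p / conj p1) (p / conj p2) (dualW p1 w1) (dualW p2 w2)
      (vweight p p1 p2 w1 w2) S := by
  set v := vweight p p1 p2 w1 w2 with hvdef
  set A := APconst p p1 p2 w1 w2 with hAdef
  have hvm : Measurable v := (hw1.1.pow_const _).mul (hw2.1.pow_const _)
  have hX : ∀ Q, IsCube Q → avg v Q * avg (dualW p1 w1) Q ^ (p / conj p1) *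
      avg (dualW p2 w2) Q ^ (p / conj p2) ≤ A := fun Q hQ => by
    rw [hAdef, APconst]
    exact le_iSup₂_of_le Q hQ le_rfl
  have ha0 : ∀ Q, IsCube Q → avg (dualW p1 w1) Q ≠ 0 := fun Q hQ =>
    avg_ne_zero hQ (dual_mass_ne_zero hp1 hw1 hQ)
  have hb0 : ∀ Q, IsCube Q → avg (dualW p2 w2) Q ≠ 0 := fun Q hQ =>
    avg_ne_zero hQ (dual_mass_ne_zero hp2 hw2 hQ)
  have hm : ∀ Q, IsCube Q → mass (dualW p1 w1) Q ≠ ∞ ∧ mass (dualW p2 w2) Q ≠ ∞ := by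
    intro Q hQ
    obtain ⟨R, hR, hQR, hvR⟩ := exists_big v hv hQ
    have hX' := ne_top_of_le_ne_top hA (hX R hR)
    have h1 := avg_ne_zero hR hvR
    have h2 := rpow_ne_zero_of (ha0 R hR) hα
    have h3 := rpow_ne_zero_of (hb0 R hR) hβ
    constructor
    · refine ne_top_of_le_ne_top (mass_ne_top hR ?_) (lintegral_mono_set hQR)
      intro h
      apply hX'
      rw [h, ENNReal.top_rpow_of_pos hα, ENNReal.mul_top h1, ENNReal.top_mul h3]
    · refine ne_top_of_le_ne_top (mass_ne_top hR ?_) (lintegral_mono_set hQR)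
      intro h
      apply hX'
      rw [h, ENNReal.top_rpow_of_pos hβ, ENNReal.mul_top (mul_ne_zero h1 h2)]
  refine ⟨fun Q hQ => ha0 Q (hS Q hQ), fun Q hQ => ?_, fun Q hQ => hb0 Q (hS Q hQ),
    fun Q hQ => ?_, fun Q hQ => ?_, fun Q hQ => ?_, fun Q hQ => hX Q (hS Q hQ), hA⟩
  · exact ENNReal.div_ne_top (hm Q (hS Q hQ)).1 (cube_facts (hS Q hQ)).2.1
  · exact ENNReal.div_ne_top (hm Q (hS Q hQ)).2 (cube_facts (hS Q hQ)).2.1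
  · refine avg_ne_zero (hS Q hQ) fun h0 => ?_
    have h1 := (lintegral_eq_zero_iff hvm).1 h0
    have h3 : ∀ᵐ x ∂(volume.restrict Q), False := by
      filter_upwards [h1, dual_ae_pos hp1 hw1 (hm Q (hS Q hQ)).1,
        dual_ae_pos hp2 hw2 (hm Q (hS Q hQ)).2] with x hx1 hx2 hx3
      exact mul_ne_zero (rpow_ne_zero_of hx2 (by positivity)) (rpow_ne_zero_of hx3 (by positivity)) hx1
    have h4 : volume.restrict Q = 0 := by
      rw [← ae_eq_bot]; exact Filter.eventually_false_iff_eq_bot.1 h3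
    exact (cube_facts (hS Q hQ)).2.1 (Measure.restrict_eq_zero.1 h4)
  · intro h
    apply ne_top_of_le_ne_top hA (hX Q (hS Q hQ))
    rw [h, ENNReal.top_mul (rpow_ne_zero_of (ha0 Q (hS Q hQ)) hα),
      ENNReal.top_mul (rpow_ne_zero_of (hb0 Q (hS Q hQ)) hβ)]

lemma toCountable {n : ℕ} {p : ℝ} (hp : 0 < p) (v : Rn n → ℝ≥0∞) (hv : Measurable v)
    (S : Set (Set (Rn n))) (hc : S.Countable) (hS : ∀ Q ∈ S, MeasurableSet Q)
    (lam : Set (Rn n) → ℝ≥0∞) (B : ℝ≥0∞)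
    (h : ∀ T : Finset (Set (Rn n)), (T : Set (Set (Rn n))) ⊆ S → ∫⁻ x, Fs T lam x ^ p * v x ≤ B) :
    ∫⁻ x, (∑' Q : S, Set.indicator (Q : Set (Rn n)) (fun _ => lam Q) x) ^ p * v x ≤ B := by
  classical
  haveI : Countable S := hc.to_subtype
  have e : ∀ x, (∑' Q : S, Set.indicator (Q : Set (Rn n)) (fun _ => lam Q) x) ^ p * v x =
      ⨆ T : Finset S, (∑ Q ∈ T, Set.indicator (Q : Set (Rn n)) (fun _ => lam Q) x) ^ p * v x := by
    intro x
    rw [ENNReal.tsum_eq_iSup_sum, ← ENNReal.iSup_mul]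
    congr 1
    exact (ENNReal.orderIsoRpow p hp).map_iSup _
  simp_rw [e]
  rw [lintegral_iSup_directed]
  · refine iSup_le fun T => ?_
    have := h (T.map (Function.Embedding.subtype _)) (by
      intro Q hQ
      simp at hQ
      exact hQ.1)
    simpa [Fs, Finset.sum_map] using this
  · intro T
    exact (((Finset.measurable_fun_sum _ fun (Q : S) _ =>
      measurable_const.indicator (hS _ Q.2)).pow_const p).mul hv).aemeasurable
  · refine Monotone.directed_le fun T T' hT x => ?_
    dsimp only
    gcongr
    
/-- `L^p(v_{\vec w})` bound for `∑_{Q∈S} ⟨σ₁⟩_Q ⟨σ₂⟩_Q χ_Q`. -/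
theorem statement6 {n : ℕ} (p p1 p2 : ℝ)
    (hp1 : 1 < p1) (hp2 : 1 < p2) (hp : 1 / p = 1 / p1 + 1 / p2) (hp0 : 1 < p) :
    ∃ C : ℝ≥0∞, C ≠ ∞ ∧
      ∀ w1 w2 : Rn n → ℝ≥0∞, IsWeight w1 → IsWeight w2 →
        APconst p p1 p2 w1 w2 ≠ ∞ →
        ∀ S : Set (Set (Rn n)), S.Countable → (∀ Q ∈ S, IsCube Q) →
          (∀ Q ∈ S, ∀ R ∈ S, Q ⊆ R ∨ R ⊆ Q ∨ Q ∩ R = ∅) → IsSparse S →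
          lpNorm
              (fun x => ∑' Q : S,
                Set.indicator (Q : Set (Rn n))
                  (fun _ => avg (dualW p1 w1) Q * avg (dualW p2 w2) Q) x) p
              (vweight p p1 p2 w1 w2) ≤
            C * APconst p p1 p2 w1 w2 ^ (1 / p) *
              (∑' Q : S,
                avg (dualW p1 w1) (Q : Set (Rn n)) ^ (p / p1) *
                  avg (dualW p2 w2) (Q : Set (Rn n)) ^ (p / p2) *
                  volume (Q : Set (Rn n))) ^ (1 / p) := by
  classical
  have hpp : 0 < p := by linarith
  have hα : p / conj p1 = p - p / p1 := by unfold conj; field_simp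
  have hβ : p / conj p2 = p - p / p2 := by unfold conj; field_simp
  have hsum1 : p / p1 + p / p2 = 1 := by
    have : p * (1 / p) = p * (1 / p1 + 1 / p2) := by rw [hp]
    rw [mul_one_div_cancel hpp.ne'] at this
    rw [this]; ring
  have hd1 : 0 < p / p1 := by positivity
  have hd2 : 0 < p / p2 := by positivity
  have hα0 : 0 < p / conj p1 := by rw [hα]; linarith
  have hβ0 : 0 < p / conj p2 := by rw [hβ]; linarith
  obtain ⟨t, ht1, ht2⟩ : ∃ t, 1 / p < t ∧
      t < min (1 / (p / conj p1)) (min (1 / (p / conj p2)) (1 / (p - 1))) := by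
    apply exists_between
    refine lt_min ?_ (lt_min ?_ ?_)
    · exact one_div_lt_one_div_of_lt hα0 (by linarith)
    · exact one_div_lt_one_div_of_lt hβ0 (by linarith)
    · exact one_div_lt_one_div_of_lt (by linarith) (by linarith)
  rw [lt_min_iff, lt_min_iff, lt_div_iff₀ hα0, lt_div_iff₀ hβ0,
    lt_div_iff₀ (by linarith : (0 : ℝ) < p - 1)] at ht2
  rw [div_lt_iff₀ hpp] at ht1
  have ht0 : 0 < t := by
    by_contra hcon
    nlinarith
  obtain ⟨C, hC, hI⟩ := finiteMain (n := n) hp0 ht0 ht2.2.2 ht2.1 ht2.2.1 (by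
    rw [show 1 + p / conj p1 + p / conj p2 = 2 * p by rw [hα, hβ]; linarith]
    linarith)
  refine ⟨C ^ (1 / p), ENNReal.rpow_ne_top_of_nonneg (by positivity) hC, ?_⟩
  intro w1 w2 hw1 hw2 hA S hSc hScube hlam hsp
  have hvm : Measurable (vweight p p1 p2 w1 w2) := (hw1.1.pow_const _).mul (hw2.1.pow_const _)
  rw [← ENNReal.mul_rpow_of_nonneg _ _ (by positivity : 0 ≤ 1 / p),
    ← ENNReal.mul_rpow_of_nonneg _ _ (by positivity : 0 ≤ 1 / p)]
  unfold _root_.lpNorm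
  apply ENNReal.rpow_le_rpow _ (by positivity)
  by_cases hv0 : ∫⁻ x, vweight p p1 p2 w1 w2 x = 0
  · have hz := (lintegral_eq_zero_iff hvm).1 hv0
    refine le_of_eq_of_le ?_ zero_le
    rw [lintegral_congr_ae (g := fun _ => 0)]
    · simp
    · filter_upwards [hz] with x hx
      rw [hx]; simp
  · refine toCountable hpp _ hvm S hSc (fun Q hQ => (cube_facts (hScube Q hQ)).1)
      (fun Q => avg (dualW p1 w1) Q * avg (dualW p2 w2) Q) _ ?_
    intro T hT
    have hTc : ∀ Q ∈ T, IsCube Q := fun Q hQ => hScube Q (hT hQ)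
    have hgood : GoodFam T := by
      obtain ⟨E, h1, h2⟩ := hsp
      refine ⟨fun Q hQ => (cube_facts (hTc Q hQ)).1, fun Q hQ => (cube_facts (hTc Q hQ)).2.1,
        fun Q hQ => (cube_facts (hTc Q hQ)).2.2, fun Q hQ R hR => ?_, E,
        fun Q hQ => h1 Q (hT hQ), h2.mono hT⟩
      rw [Set.disjoint_iff_inter_eq_empty]
      exact hlam Q (hT hQ) R (hT hR)
    have h := hI _ _ _ _ T hvm
      (cube_adm hpp hp1 hp2 hα0 hβ0 hw1 hw2 hA hv0 T hTc) hgood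
    rw [show p - p / conj p1 = p / p1 by rw [hα]; ring,
      show p - p / conj p2 = p / p2 by rw [hβ]; ring] at h
    refine h.trans ?_
    gcongr
    have hle := ENNReal.sum_le_tsum (f := fun Q : S => avg (dualW p1 w1) (Q : Set (Rn n)) ^ (p / p1) *
      avg (dualW p2 w2) (Q : Set (Rn n)) ^ (p / p2) * volume (Q : Set (Rn n)))
      (T.subtype (· ∈ S))
    refine le_trans (le_of_eq ?_) hle
    exact (Finset.sum_subtype_of_mem (f := fun Q => avg (dualW p1 w1) Q ^ (p / p1) *
      avg (dualW p2 w2) Q ^ (p / p2) * volume Q) (fun Q hQ => hT hQ)).symm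
end
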